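/- arXiv:1304.0231 — 13 statements merged into one kernel-verified Lean document; each statement's English description precedes it below -/
import Mathlib

section
/- Let K be a field. The set O (consisting of all osculating tangents ℓ(u₁,u₂) of the Cayley surface together with the line g∞) is a partial spread of P₃(K) — i.e., any two distinct members of O have trivial intersection as subspaces of K⁴ — if and only if the characteristic of K is not 3 and 1 is the only cube root of unity in K (for all w ∈ K, w³ = 1 implies w = 1). -/
/-- The Cayley cubic form `f(x₀,x₁,x₂,x₃) = x₀x₁x₂ − x₁³ − x₀²x₃`. -/
def cayleyF {K : Type*} [Field K] (x : Fin 4 → K) : K :=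
  x 0 * x 1 * x 2 - (x 1) ^ 3 - (x 0) ^ 2 * x 3

/-- The affine point `P(u₁,u₂)` of the Cayley surface. -/
def cayleyP (K : Type*) [Field K] (u₁ u₂ : K) : Fin 4 → K :=
  ![1, u₁, u₂, u₁ * u₂ - u₁ ^ 3]

/-- The direction vector `d(u₁,u₂) = (0,1,3u₁,u₂)`. -/
def cayleyD (K : Type*) [Field K] (u₁ u₂ : K) : Fin 4 → K :=
  ![0, 1, 3 * u₁, u₂]

/-- The osculating tangent `ℓ(u₁,u₂) = span{P(u₁,u₂), d(u₁,u₂)}`. -/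
def oscTang (K : Type*) [Field K] (u₁ u₂ : K) : Submodule K (Fin 4 → K) :=
  Submodule.span K {cayleyP K u₁ u₂, cayleyD K u₁ u₂}

/-- The line `g∞ = span{(0,0,1,0), (0,0,0,1)}`. -/
def gInf (K : Type*) [Field K] : Submodule K (Fin 4 → K) :=
  Submodule.span K {![0, 0, 1, 0], ![0, 0, 0, 1]}

/-- The Betten–Walker line set `O`: all osculating tangents together with `g∞`. -/
def BWset (K : Type*) [Field K] : Set (Submodule K (Fin 4 → K)) :=
  {ℓ | ∃ u₁ u₂ : K, ℓ = oscTang K u₁ u₂} ∪ {gInf K}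

/-!
The osculating tangent `ℓ(u₁,u₂)` meets the Cayley surface with multiplicity three at `P(u₁,u₂)`, so
the cubic form restricts to it as minus the cube of the linear form `x₁ - u₁x₀`. At a common point
of `ℓ(u₁,u₂)` and `ℓ(v₁,v₂)` outside the plane `x₀ = 0` we get `(x₁ - u₁x₀)³ = (x₁ - v₁x₀)³`, which
forces the two tangents to coincide as soon as cubing is injective; when `w³ = c` has several
solutions `w`, the tangents `ℓ(w,3w²)` all pass through `(1,0,0,-c)`. In the plane `x₀ = 0`
distinct tangents meet only in characteristic three, where `(0,1,3u₁,u₂)` no longer depends on `u₁`.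
-/

theorem ringChar_eq_iff_natCast_eq_zero {R : Type*} [NonAssocSemiring R] [Nontrivial R] {p : ℕ}
    (hp : p.Prime) : ringChar R = p ↔ (p : R) = 0 :=
  ⟨fun h ↦ by rw [← h, ringChar.Nat.cast_ringChar], CharP.ringChar_of_prime_eq_zero hp⟩

theorem pow_left_injective_iff_eq_one_of_pow_eq_one {G₀ : Type*} [CommGroupWithZero G₀] {n : ℕ}
    (hn : n ≠ 0) :
    Function.Injective (fun a : G₀ ↦ a ^ n) ↔ ∀ w : G₀, w ^ n = 1 → w = 1 := by
  refine ⟨fun hinj w hw ↦ hinj (hw.trans (one_pow n).symm), ?_⟩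
  intro hroot a b (hab : a ^ n = b ^ n)
  obtain rfl | hb := eq_or_ne b 0
  · exact eq_zero_of_pow_eq_zero (hab.trans (zero_pow hn))
  · have hquot : (a / b) ^ n = 1 := by rw [div_pow, hab, div_self (pow_ne_zero n hb)]
    exact (div_eq_one_iff_eq hb).1 (hroot _ hquot)

section Cayley

variable {K : Type*} [Field K] {u₁ u₂ v₁ v₂ : K} {x : Fin 4 → K}

theorem mem_gInf_iff : x ∈ gInf K ↔ x 0 = 0 ∧ x 1 = 0 := by
  rw [gInf, Submodule.mem_span_pair]
  constructor
  · rintro ⟨a, b, rfl⟩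
    simp
  · rintro ⟨h0, h1⟩
    refine ⟨x 2, x 3, ?_⟩
    ext i
    fin_cases i <;> simp [h0, h1]

theorem mem_oscTang_iff :
    x ∈ oscTang K u₁ u₂ ↔
      x 2 = x 0 * u₂ + (x 1 - x 0 * u₁) * (3 * u₁) ∧
        x 3 = x 0 * (u₁ * u₂ - u₁ ^ 3) + (x 1 - x 0 * u₁) * u₂ := by
  rw [oscTang, cayleyP, cayleyD, Submodule.mem_span_pair]
  constructor
  · rintro ⟨a, b, rfl⟩
    simp
  · rintro ⟨h2, h3⟩
    refine ⟨x 0, x 1 - x 0 * u₁, ?_⟩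
    ext i
    fin_cases i <;> simp [h2, h3]

theorem disjoint_gInf_oscTang (u₁ u₂ : K) : Disjoint (gInf K) (oscTang K u₁ u₂) := by
  refine Submodule.disjoint_def.2 fun x hinf htan ↦ ?_
  obtain ⟨h0, h1⟩ := mem_gInf_iff.1 hinf
  obtain ⟨h2, h3⟩ := mem_oscTang_iff.1 htan
  ext i
  fin_cases i <;> simp [h0, h1, h2, h3]

theorem cayleyP_mem_oscTang (u₁ u₂ : K) : cayleyP K u₁ u₂ ∈ oscTang K u₁ u₂ :=
  Submodule.subset_span (Set.mem_insert _ _)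

theorem cayleyF_cayleyP (u₁ u₂ : K) : cayleyF (cayleyP K u₁ u₂) = 0 := by
  simp [cayleyF, cayleyP]

theorem cayleyF_eq_neg_pow_three_of_mem_oscTang (hx : x ∈ oscTang K u₁ u₂) :
    cayleyF x = -(x 1 - x 0 * u₁) ^ 3 := by
  obtain ⟨h2, h3⟩ := mem_oscTang_iff.1 hx
  rw [cayleyF, h2, h3]
  ring

theorem snd_eq_of_mem_oscTang (hx0 : x 0 ≠ 0) (hu : x ∈ oscTang K u₁ u₂)
    (hv : x ∈ oscTang K u₁ v₂) : u₂ = v₂ := by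
  have h2 := (mem_oscTang_iff.1 hu).1.symm.trans (mem_oscTang_iff.1 hv).1
  exact mul_left_cancel₀ hx0 (add_right_cancel h2)

theorem oscTang_injective : Function.Injective fun u : K × K ↦ oscTang K u.1 u.2 := by
  rintro ⟨u₁, u₂⟩ ⟨v₁, v₂⟩ (huv : oscTang K u₁ u₂ = oscTang K v₁ v₂)
  have hP : cayleyP K u₁ u₂ ∈ oscTang K v₁ v₂ := huv ▸ cayleyP_mem_oscTang u₁ u₂
  have hcube := cayleyF_eq_neg_pow_three_of_mem_oscTang hP
  rw [cayleyF_cayleyP, zero_eq_neg, pow_eq_zero_iff three_ne_zero] at hcube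
  obtain rfl : u₁ = v₁ := by simpa [cayleyP, sub_eq_zero] using hcube
  rw [snd_eq_of_mem_oscTang (by simp [cayleyP]) (cayleyP_mem_oscTang u₁ u₂) hP]

theorem params_eq_of_mem_oscTang_of_apply_zero_ne_zero
    (hcube : Function.Injective fun a : K ↦ a ^ 3) (hx0 : x 0 ≠ 0)
    (hu : x ∈ oscTang K u₁ u₂) (hv : x ∈ oscTang K v₁ v₂) : u₁ = v₁ ∧ u₂ = v₂ := by
  have hpow : (x 1 - x 0 * u₁) ^ 3 = (x 1 - x 0 * v₁) ^ 3 :=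
    neg_injective <| (cayleyF_eq_neg_pow_three_of_mem_oscTang hu).symm.trans
      (cayleyF_eq_neg_pow_three_of_mem_oscTang hv)
  obtain rfl : u₁ = v₁ := mul_left_cancel₀ hx0 (sub_right_injective (hcube hpow))
  exact ⟨rfl, snd_eq_of_mem_oscTang hx0 hu hv⟩

theorem params_eq_of_mem_oscTang_of_apply_zero_eq_zero (h3 : (3 : K) ≠ 0) (hx : x ≠ 0)
    (hx0 : x 0 = 0) (hu : x ∈ oscTang K u₁ u₂) (hv : x ∈ oscTang K v₁ v₂) :
    u₁ = v₁ ∧ u₂ = v₂ := by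
  have hx1 : x 1 ≠ 0 := fun hx1 ↦
    hx (Submodule.disjoint_def.1 (disjoint_gInf_oscTang u₁ u₂) x (mem_gInf_iff.2 ⟨hx0, hx1⟩) hu)
  simp only [mem_oscTang_iff, hx0, zero_mul, sub_zero, zero_add] at hu hv
  exact ⟨mul_left_cancel₀ h3 (mul_left_cancel₀ hx1 (hu.1.symm.trans hv.1)),
    mul_left_cancel₀ hx1 (hu.2.symm.trans hv.2)⟩

theorem mem_oscTang_of_three_eq_zero (h3 : (3 : K) = 0) (u₁ u₂ : K) :
    ![0, 1, 0, u₂] ∈ oscTang K u₁ u₂ := by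
  simp [mem_oscTang_iff, h3]

theorem mem_oscTang_three_mul_sq (w : K) : ![1, 0, 0, -w ^ 3] ∈ oscTang K w (3 * w ^ 2) := by
  simp only [mem_oscTang_iff, Matrix.cons_val]
  constructor <;> ring

theorem pairwise_disjoint_oscTang_iff :
    Pairwise (Function.onFun Disjoint fun u : K × K ↦ oscTang K u.1 u.2) ↔
      (3 : K) ≠ 0 ∧ Function.Injective fun a : K ↦ a ^ 3 := by
  constructor
  · intro hdisj
    have eq_of_mem {x : Fin 4 → K} (hx : x ≠ 0) {u v : K × K} (hu : x ∈ oscTang K u.1 u.2)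
        (hv : x ∈ oscTang K v.1 v.2) : u = v :=
      hdisj.eq fun huv ↦ hx (Submodule.disjoint_def.1 huv x hu hv)
    refine ⟨fun h3 ↦ ?_, fun a b (hab : a ^ 3 = b ^ 3) ↦ ?_⟩
    · have h01 : ((0 : K), (0 : K)) = (1, 0) :=
        eq_of_mem (by simp) (mem_oscTang_of_three_eq_zero h3 0 0)
          (mem_oscTang_of_three_eq_zero h3 1 0)
      exact zero_ne_one (congrArg Prod.fst h01)
    · have hparam : (a, 3 * a ^ 2) = (b, 3 * b ^ 2) :=
        eq_of_mem (by simp) (mem_oscTang_three_mul_sq a) (hab ▸ mem_oscTang_three_mul_sq b)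
      exact congrArg Prod.fst hparam
  · rintro ⟨h3, hcube⟩ u v huv
    refine Submodule.disjoint_def.2 fun x hu hv ↦ by_contra fun hx ↦ huv (Prod.ext_iff.2 ?_)
    by_cases hx0 : x 0 = 0
    · exact params_eq_of_mem_oscTang_of_apply_zero_eq_zero h3 hx hx0 hu hv
    · exact params_eq_of_mem_oscTang_of_apply_zero_ne_zero hcube hx0 hu hv

theorem BWset_eq_insert_range :
    BWset K = insert (gInf K) (Set.range fun u : K × K ↦ oscTang K u.1 u.2) := by
  ext ℓ
  simp [BWset, eq_comm]

theorem pairwise_disjoint_BWset_iff :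
    (BWset K).Pairwise Disjoint ↔
      Pairwise (Function.onFun Disjoint fun u : K × K ↦ oscTang K u.1 u.2) := by
  rw [BWset_eq_insert_range, Set.pairwise_insert_of_symm, ← Set.image_univ,
    oscTang_injective.injOn.pairwise_image, Set.pairwise_univ, and_iff_left]
  rintro _ ⟨u, -, rfl⟩ -
  exact disjoint_gInf_oscTang u.1 u.2

end Cayley

/-- `O` is a partial spread of `P₃(K)` iff `char K ≠ 3` and `1` is the
only cube root of unity in `K`. -/
theorem bw_partial_spread_iff (K : Type*) [Field K] :
    (∀ ℓ ∈ BWset K, ∀ m ∈ BWset K, ℓ ≠ m → ℓ ⊓ m = ⊥) ↔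
      (ringChar K ≠ 3 ∧ ∀ w : K, w ^ 3 = 1 → w = 1) := by
  have hthree : ringChar K ≠ 3 ↔ (3 : K) ≠ 0 :=
    not_congr (ringChar_eq_iff_natCast_eq_zero Nat.prime_three)
  have hcube := pow_left_injective_iff_eq_one_of_pow_eq_one (G₀ := K) three_ne_zero
  calc
    _ ↔ (BWset K).Pairwise Disjoint := by simp only [Set.Pairwise, disjoint_iff]
    _ ↔ Pairwise (Function.onFun Disjoint fun u : K × K ↦ oscTang K u.1 u.2) :=
      pairwise_disjoint_BWset_iff
    _ ↔ (3 : K) ≠ 0 ∧ Function.Injective fun a : K ↦ a ^ 3 := pairwise_disjoint_oscTang_iff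
    _ ↔ ringChar K ≠ 3 ∧ ∀ w : K, w ^ 3 = 1 → w = 1 := and_congr hthree.symm hcube
end

section
/- Let K be a field of characteristic ≠ 3 in which every element has exactly one cube root. Then O is a dual spread of P₃(K): every 3-dimensional subspace of K⁴ contains exactly one member of O. -/
/-!
The line `g∞` is skew to every osculating tangent, so a plane through `g∞` contains no other member
of `O`. For a plane `a₀x₀ + a₁x₁ + a₂x₂ + a₃x₃ = 0` that misses `g∞`, i.e. with `(a₂, a₃) ≠ (0, 0)`,
the two equations expressing that it contains `ℓ(u₁,u₂)` determine `u₂` from `u₁`. Eliminating `u₂`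
leaves a linear equation for `u₁` with leading coefficient `3a₂` when `a₃ = 0`, and otherwise,
after completing the cube, the equation `(a₃u₁ + a₂)³ = a₂³ - a₁a₂a₃ + a₀a₃²`.
-/

section Hyperplanes

theorem exists_ker_eq_of_finrank_add_one_eq {K V : Type*} [Field K] [AddCommGroup V] [Module K V]
    {H : Submodule K V} (hH : Module.finrank K H + 1 = Module.finrank K V) :
    ∃ φ : Module.Dual K V, LinearMap.ker φ = H := by
  have : FiniteDimensional K V := Module.finite_of_finrank_pos (by lia)
  have hlt : H < ⊤ := Submodule.lt_top_of_finrank_lt_finrank (by lia)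
  obtain ⟨φ, hφ, hle⟩ := H.exists_le_ker_of_lt_top hlt
  have hker := Module.Dual.finrank_ker_add_one_of_ne_zero hφ
  exact ⟨φ, (Submodule.eq_of_le_of_finrank_eq hle (by lia)).symm⟩

variable {ι K : Type*} [Fintype ι] [DecidableEq ι] [Field K]

/-- The subspace `∑ i, a i * x i = 0` of `K^ι`. It is a hyperplane for `a ≠ 0` and the whole space
for `a = 0`. -/
def hyperplane (a : ι → K) : Submodule K (ι → K) :=
  LinearMap.ker (dotProductEquiv K ι a)

theorem mem_hyperplane {a x : ι → K} : x ∈ hyperplane a ↔ a ⬝ᵥ x = 0 :=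
  Iff.rfl

theorem exists_hyperplane_eq_of_finrank_add_one_eq {H : Submodule K (ι → K)}
    (hH : Module.finrank K H + 1 = Fintype.card ι) : ∃ a : ι → K, hyperplane a = H := by
  obtain ⟨φ, rfl⟩ := exists_ker_eq_of_finrank_add_one_eq
    (hH.trans (Module.finrank_fintype_fun_eq_card K).symm)
  exact ⟨(dotProductEquiv K ι).symm φ, by rw [hyperplane, LinearEquiv.apply_symm_apply]⟩

end Hyperplanes

section Incidence

variable {K : Type*} [Field K] {a : Fin 4 → K} {u₁ u₂ : K} {H : Submodule K (Fin 4 → K)}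

theorem gInf_le_hyperplane_iff : gInf K ≤ hyperplane a ↔ a 2 = 0 ∧ a 3 = 0 := by
  simp [gInf, Submodule.span_le, Set.pair_subset_iff, mem_hyperplane, dotProduct,
    Fin.sum_univ_four]

theorem oscTang_le_hyperplane_iff :
    oscTang K u₁ u₂ ≤ hyperplane a ↔
      a 0 + a 1 * u₁ + a 2 * u₂ + a 3 * (u₁ * u₂ - u₁ ^ 3) = 0 ∧
        a 1 + a 2 * (3 * u₁) + a 3 * u₂ = 0 := by
  simp [oscTang, cayleyP, cayleyD, Submodule.span_le, Set.pair_subset_iff, mem_hyperplane,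
    dotProduct, Fin.sum_univ_four]

theorem oscTang_le_hyperplane_iff_of_apply_three_eq_zero (h3 : (3 : K) ≠ 0) (ha₂ : a 2 ≠ 0)
    (ha₃ : a 3 = 0) :
    oscTang K u₁ u₂ ≤ hyperplane a ↔
      u₁ = -a 1 / (3 * a 2) ∧ u₂ = -(a 0 + a 1 * u₁) / a 2 := by
  rw [oscTang_le_hyperplane_iff, ha₃, eq_div_iff (mul_ne_zero h3 ha₂), eq_div_iff ha₂]
  constructor
  · rintro ⟨hP, hd⟩
    exact ⟨by linear_combination hd, by linear_combination hP⟩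
  · rintro ⟨hu₁, hu₂⟩
    exact ⟨by linear_combination hu₂, by linear_combination hu₁⟩

theorem oscTang_le_hyperplane_iff_of_apply_three_ne_zero (ha₃ : a 3 ≠ 0) :
    oscTang K u₁ u₂ ≤ hyperplane a ↔
      (a 3 * u₁ + a 2) ^ 3 = a 2 ^ 3 - a 1 * a 2 * a 3 + a 0 * a 3 ^ 2 ∧
        u₂ = -(a 1 + a 2 * (3 * u₁)) / a 3 := by
  rw [oscTang_le_hyperplane_iff, eq_div_iff ha₃]
  constructor
  · rintro ⟨hP, hd⟩
    exact ⟨by linear_combination a 3 * ((a 2 + a 3 * u₁) * hd - a 3 * hP),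
      by linear_combination hd⟩
  · rintro ⟨hcube, hu₂⟩
    refine ⟨mul_left_cancel₀ (pow_ne_zero 2 ha₃) ?_, by linear_combination hu₂⟩
    linear_combination a 3 * (a 2 + a 3 * u₁) * hu₂ - hcube

theorem existsUnique_oscTang_le_hyperplane_of_apply_three_eq_zero (h3 : (3 : K) ≠ 0)
    (ha₂ : a 2 ≠ 0) (ha₃ : a 3 = 0) :
    ∃! u : K × K, oscTang K u.1 u.2 ≤ hyperplane a := by
  simp only [oscTang_le_hyperplane_iff_of_apply_three_eq_zero h3 ha₂ ha₃]
  let u : K := -a 1 / (3 * a 2)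
  refine ⟨(u, -(a 0 + a 1 * u) / a 2), ⟨rfl, rfl⟩, ?_⟩
  rintro v ⟨hv₁, hv₂⟩
  exact Prod.ext hv₁ (by rw [hv₂, hv₁])

theorem existsUnique_oscTang_le_hyperplane_of_apply_three_ne_zero
    (hroot : ∀ b : K, ∃! r : K, r ^ 3 = b) (ha₃ : a 3 ≠ 0) :
    ∃! u : K × K, oscTang K u.1 u.2 ≤ hyperplane a := by
  simp only [oscTang_le_hyperplane_iff_of_apply_three_ne_zero ha₃]
  obtain ⟨r, hr, hr_unique⟩ := hroot (a 2 ^ 3 - a 1 * a 2 * a 3 + a 0 * a 3 ^ 2)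
  let u : K := (r - a 2) / a 3
  have hu : a 3 * u + a 2 = r := by rw [mul_div_cancel₀ _ ha₃, sub_add_cancel]
  refine ⟨(u, -(a 1 + a 2 * (3 * u)) / a 3), ⟨by rw [hu]; exact hr, rfl⟩, ?_⟩
  rintro v ⟨hv_cube, hv₂⟩
  have hv₁ : v.1 = u :=
    mul_left_cancel₀ ha₃ (add_right_cancel ((hr_unique _ hv_cube).trans hu.symm))
  exact Prod.ext hv₁ (by rw [hv₂, hv₁])

theorem codisjoint_oscTang_gInf (u₁ u₂ : K) : Codisjoint (oscTang K u₁ u₂) (gInf K) := by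
  rw [Submodule.codisjoint_iff_exists_add_eq]
  intro x
  let y := x 0 • cayleyP K u₁ u₂ + (x 1 - x 0 * u₁) • cayleyD K u₁ u₂
  refine ⟨y, x - y, Submodule.mem_span_pair.2 ⟨_, _, rfl⟩,
    Submodule.mem_span_pair.2 ⟨(x - y) 2, (x - y) 3, ?_⟩, add_sub_cancel y x⟩
  ext i
  fin_cases i <;> simp [y, cayleyP, cayleyD]

theorem existsUnique_mem_BWset_le_of_gInf_le (hH : H ≠ ⊤) (hinf : gInf K ≤ H) :
    ∃! ℓ, ℓ ∈ BWset K ∧ ℓ ≤ H := by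
  refine ⟨gInf K, ⟨Or.inr rfl, hinf⟩, ?_⟩
  rintro ℓ ⟨⟨u₁, u₂, rfl⟩ | hℓ, hle⟩
  · exact absurd (top_le_iff.1 (codisjoint_oscTang_gInf u₁ u₂ hle hinf)) hH
  · exact hℓ

theorem existsUnique_mem_BWset_le_of_not_gInf_le (hinf : ¬ gInf K ≤ H)
    (hosc : ∃! u : K × K, oscTang K u.1 u.2 ≤ H) : ∃! ℓ, ℓ ∈ BWset K ∧ ℓ ≤ H := by
  obtain ⟨u, hu, hu_unique⟩ := hosc
  refine ⟨oscTang K u.1 u.2, ⟨Or.inl ⟨u.1, u.2, rfl⟩, hu⟩, ?_⟩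
  rintro ℓ ⟨⟨v₁, v₂, rfl⟩ | rfl, hle⟩
  · rw [← hu_unique (v₁, v₂) hle]
  · exact absurd hle hinf

end Incidence

/-- if `char K ≠ 3` and every element of `K` has exactly one cube root,
then `O` is a dual spread: every 3-dimensional subspace of `K⁴` contains exactly one
member of `O`. -/
theorem bw_dual_spread (K : Type*) [Field K]
    (hchar : ringChar K ≠ 3) (hroot : ∀ a : K, ∃! r : K, r ^ 3 = a) :
    ∀ H : Submodule K (Fin 4 → K), Module.finrank K H = 3 →
      ∃! ℓ : Submodule K (Fin 4 → K), ℓ ∈ BWset K ∧ ℓ ≤ H := by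
  intro H hH
  have h3 : (3 : K) ≠ 0 := fun h =>
    hchar (CharP.ringChar_of_prime_eq_zero Nat.prime_three (by exact_mod_cast h))
  by_cases hinf : gInf K ≤ H
  · exact existsUnique_mem_BWset_le_of_gInf_le (by rintro rfl; simp at hH) hinf
  refine existsUnique_mem_BWset_le_of_not_gInf_le hinf ?_
  obtain ⟨a, rfl⟩ := exists_hyperplane_eq_of_finrank_add_one_eq (H := H) (by simp [hH])
  by_cases ha₃ : a 3 = 0
  · have ha₂ : a 2 ≠ 0 := fun ha₂ => hinf (gInf_le_hyperplane_iff.2 ⟨ha₂, ha₃⟩)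
    exact existsUnique_oscTang_le_hyperplane_of_apply_three_eq_zero h3 ha₂ ha₃
  · exact existsUnique_oscTang_le_hyperplane_of_apply_three_ne_zero hroot ha₃
end

section
/- Let K be a field. Every 3-dimensional subspace of K⁴ contains at most one member of O (i.e., O is a partial dual spread) if and only if the characteristic of K is not 3 and 1 is the only cube root of unity in K. (Thus O is a partial spread if and only if it is a partial dual spread.) -/
section Order

variable {α : Type*} [PartialOrder α] [OrderTop α] [IsCoatomic α]

lemma not_codisjoint_iff_exists_isCoatom {a b : α} :
    ¬Codisjoint a b ↔ ∃ c, IsCoatom c ∧ a ≤ c ∧ b ≤ c := by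
  constructor
  · intro hab
    simp only [Codisjoint, not_forall] at hab
    obtain ⟨x, hax, hbx, hx⟩ := hab
    obtain ⟨c, hc, hxc⟩ := (eq_top_or_exists_le_coatom x).resolve_left fun h => hx h.ge
    exact ⟨c, hc, hax.trans hxc, hbx.trans hxc⟩
  · rintro ⟨c, hc, hac, hbc⟩ hab
    exact hc.1 (top_le_iff.1 (hab hac hbc))

lemma pairwise_codisjoint_iff_forall_isCoatom {S : Set α} :
    S.Pairwise Codisjoint ↔
      ∀ c, IsCoatom c → ∀ a ∈ S, ∀ b ∈ S, a ≤ c → b ≤ c → a = b := by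
  constructor
  · intro hS c hc a ha b hb hac hbc
    by_contra hab
    exact not_codisjoint_iff_exists_isCoatom.2 ⟨c, hc, hac, hbc⟩ (hS ha hb hab)
  · intro hS a ha b hb hab
    by_contra hcod
    obtain ⟨c, hc, hac, hbc⟩ := not_codisjoint_iff_exists_isCoatom.1 hcod
    exact hab (hS c hc a ha b hb hac hbc)

end Order

section LinearAlgebra

lemma isCoatom_iff_finrank_add_one {K V : Type*} [DivisionRing K] [AddCommGroup V] [Module K V]
    [FiniteDimensional K V] {H : Submodule K V} :
    IsCoatom H ↔ Module.finrank K H + 1 = Module.finrank K V := by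
  rw [← isSimpleModule_iff_isCoatom, isSimpleModule_iff_finrank_eq_one,
    ← H.finrank_quotient_add_finrank]
  omega

variable {R : Type*} [CommRing R]

lemma span_range_row_eq_top_iff_isUnit_det {n : Type*} [Fintype n] [DecidableEq n]
    {A : Matrix n n R} : Submodule.span R (Set.range A.row) = ⊤ ↔ IsUnit A.det := by
  rw [← range_vecMulLinear, LinearMap.range_eq_top, Matrix.coe_vecMulLinear,
    Matrix.vecMul_surjective_iff_isUnit, Matrix.isUnit_iff_isUnit_det]

lemma codisjoint_span_pair_iff_isUnit_det {a b c d : Fin 4 → R} :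
    Codisjoint (Submodule.span R {a, b}) (Submodule.span R {c, d}) ↔
      IsUnit (Matrix.of ![a, b, c, d]).det := by
  have hrows : Set.range (Matrix.of ![a, b, c, d]).row = {a, b} ∪ {c, d} := by
    change Set.range ![a, b, c, d] = _
    simp only [Matrix.range_cons, Matrix.range_empty, Set.union_empty, Set.singleton_union,
      Set.insert_union]
  rw [← span_range_row_eq_top_iff_isUnit_det, hrows, Submodule.span_union, codisjoint_iff]

end LinearAlgebra

section CubeRoots

lemma forall_sq_add_self_add_one_ne_zero_iff {R : Type*} [CommRing R] [IsDomain R] :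
    (∀ w : R, w ^ 2 + w + 1 ≠ 0) ↔ ringChar R ≠ 3 ∧ ∀ w : R, w ^ 3 = 1 → w = 1 := by
  constructor
  · intro h
    refine ⟨fun hchar => h 1 ?_, fun w hw => ?_⟩
    · have h3 : ((3 : ℕ) : R) = 0 := (ringChar.spec R 3).2 hchar.dvd
      push_cast at h3
      linear_combination h3
    · have hfactor : (w - 1) * (w ^ 2 + w + 1) = 0 := by linear_combination hw
      exact sub_eq_zero.1 ((mul_eq_zero.1 hfactor).resolve_right (h w))
  · rintro ⟨hchar, hroot⟩ w hw
    obtain rfl : w = 1 := hroot w (by linear_combination (w - 1) * hw)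
    have h3 : ((3 : ℕ) : R) = 0 := by
      push_cast
      linear_combination hw
    exact hchar (CharP.ringChar_of_prime_eq_zero Nat.prime_three h3)

lemma eq_zero_and_eq_zero_of_sq_add_mul_add_sq_eq_zero {K : Type*} [Field K]
    (h : ∀ w : K, w ^ 2 + w + 1 ≠ 0) {x y : K} (hxy : x ^ 2 + x * y + y ^ 2 = 0) :
    x = 0 ∧ y = 0 := by
  have hx : x = 0 := by
    by_contra hx
    refine h (y / x) ?_
    field_simp
    linear_combination hxy
  subst hx
  exact ⟨rfl, by simpa using hxy⟩

end CubeRoots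

section BettenWalker

variable {K : Type*} [Field K]

lemma cayleyP_mem_oscTang_iff {u₁ u₂ v₁ v₂ : K} :
    cayleyP K v₁ v₂ ∈ oscTang K u₁ u₂ ↔ v₁ = u₁ ∧ v₂ = u₂ := by
  constructor
  · intro hmem
    obtain ⟨s, t, hst⟩ := Submodule.mem_span_pair.1 hmem
    have h0 : s = 1 := by simpa [cayleyP, cayleyD] using congrFun hst 0
    have h1 : s * u₁ + t = v₁ := by simpa [cayleyP, cayleyD] using congrFun hst 1
    have h2 : s * u₂ + t * (3 * u₁) = v₂ := by simpa [cayleyP, cayleyD] using congrFun hst 2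
    have h3 : s * (u₁ * u₂ - u₁ ^ 3) + t * u₂ = v₁ * v₂ - v₁ ^ 3 := by
      simpa [cayleyP, cayleyD] using congrFun hst 3
    subst h0 h1 h2
    have ht : t = 0 := by
      apply eq_zero_of_pow_eq_zero (n := 3)
      linear_combination h3
    simp [ht]
  · rintro ⟨rfl, rfl⟩
    exact Submodule.subset_span (Set.mem_insert _ _)

lemma oscTang_inj {u₁ u₂ v₁ v₂ : K} :
    oscTang K u₁ u₂ = oscTang K v₁ v₂ ↔ u₁ = v₁ ∧ u₂ = v₂ := by
  constructor
  · intro h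
    exact cayleyP_mem_oscTang_iff.1 (h ▸ cayleyP_mem_oscTang_iff.2 ⟨rfl, rfl⟩)
  · rintro ⟨rfl, rfl⟩
    rfl

lemma codisjoint_gInf_oscTang (u₁ u₂ : K) : Codisjoint (gInf K) (oscTang K u₁ u₂) := by
  rw [gInf, oscTang, codisjoint_span_pair_iff_isUnit_det]
  simp [cayleyP, cayleyD, Matrix.det_succ_row_zero, Fin.sum_univ_succ, Fin.succAbove]

lemma codisjoint_oscTang_iff (u₁ u₂ a b : K) :
    Codisjoint (oscTang K u₁ u₂) (oscTang K (u₁ + a) (u₂ + 3 * u₁ * a + a ^ 2 - b)) ↔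
      (a ^ 2) ^ 2 + a ^ 2 * b + b ^ 2 ≠ 0 := by
  rw [oscTang, oscTang, codisjoint_span_pair_iff_isUnit_det, isUnit_iff_ne_zero]
  suffices hdet : (Matrix.of ![cayleyP K u₁ u₂, cayleyD K u₁ u₂,
      cayleyP K (u₁ + a) (u₂ + 3 * u₁ * a + a ^ 2 - b),
      cayleyD K (u₁ + a) (u₂ + 3 * u₁ * a + a ^ 2 - b)]).det =
        (a ^ 2) ^ 2 + a ^ 2 * b + b ^ 2 by rw [hdet]
  simp [cayleyP, cayleyD, Matrix.det_succ_row_zero, Fin.sum_univ_succ, Fin.succAbove]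
  ring

lemma pairwise_codisjoint_BWset_iff :
    (BWset K).Pairwise Codisjoint ↔ ∀ w : K, w ^ 2 + w + 1 ≠ 0 := by
  constructor
  · intro hO w hw
    have hne : oscTang K 0 0 ≠ oscTang K (0 + 1) (0 + 3 * 0 * 1 + 1 ^ 2 - w) := by
      simp [oscTang_inj]
    refine (codisjoint_oscTang_iff 0 0 1 w).1
      (hO (Or.inl ⟨_, _, rfl⟩) (Or.inl ⟨_, _, rfl⟩) hne) ?_
    linear_combination hw
  · rintro h _ (⟨u₁, u₂, rfl⟩ | rfl) _ (⟨v₁, v₂, rfl⟩ | rfl) hne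
    · obtain ⟨a, rfl⟩ : ∃ a, v₁ = u₁ + a := ⟨v₁ - u₁, by ring⟩
      obtain ⟨b, rfl⟩ : ∃ b, v₂ = u₂ + 3 * u₁ * a + a ^ 2 - b :=
        ⟨u₂ + 3 * u₁ * a + a ^ 2 - v₂, by ring⟩
      rw [codisjoint_oscTang_iff]
      intro hform
      obtain ⟨ha, rfl⟩ := eq_zero_and_eq_zero_of_sq_add_mul_add_sq_eq_zero h hform
      obtain rfl : a = 0 := eq_zero_of_pow_eq_zero ha
      exact hne (by simp)
    · exact (codisjoint_gInf_oscTang u₁ u₂).symm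
    · exact codisjoint_gInf_oscTang v₁ v₂
    · exact absurd rfl hne

end BettenWalker

/-- every 3-dimensional subspace of `K⁴` contains at most one member of
`O` (i.e. `O` is a partial dual spread) iff `char K ≠ 3` and `1` is the only cube
root of unity in `K`. -/
theorem bw_partial_dual_spread_iff (K : Type*) [Field K] :
    (∀ H : Submodule K (Fin 4 → K), Module.finrank K H = 3 →
        ∀ ℓ ∈ BWset K, ∀ m ∈ BWset K, ℓ ≤ H → m ≤ H → ℓ = m) ↔
      (ringChar K ≠ 3 ∧ ∀ w : K, w ^ 3 = 1 → w = 1) := by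
  have hcoatom (H : Submodule K (Fin 4 → K)) : Module.finrank K H = 3 ↔ IsCoatom H := by
    simp [isCoatom_iff_finrank_add_one]
  simp only [hcoatom]
  rw [← pairwise_codisjoint_iff_forall_isCoatom, pairwise_codisjoint_BWset_iff,
    forall_sq_add_self_add_one_ne_zero_iff]
end

section
/- Let K be a field. For all u₁, u₂, s ∈ K one has f(P(u₁,u₂) + s·d(u₁,u₂)) = −s³ and f(d(u₁,u₂)) = −1. Consequently, the nonzero vectors x in the osculating tangent ℓ(u₁,u₂) with f(x) = 0 are exactly the nonzero scalar multiples of P(u₁,u₂); that is, the osculating tangent meets the Cayley surface F precisely in the single point P(u₁,u₂) (with multiplicity three). -/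
section OsculatingTangent

variable {K : Type*} [Field K] (u₁ u₂ : K)

theorem cayleyF_smul_cayleyP_add_smul_cayleyD (a s : K) :
    cayleyF (a • cayleyP K u₁ u₂ + s • cayleyD K u₁ u₂) = -s ^ 3 := by
  simp only [cayleyF, cayleyP, cayleyD, Matrix.smul_cons, Matrix.smul_empty, Matrix.add_cons,
    Matrix.head_cons, Matrix.tail_cons, Matrix.empty_add_empty, Matrix.cons_val, smul_eq_mul]
  ring

theorem cayleyF_cayleyP_add_smul_cayleyD (s : K) :
    cayleyF (cayleyP K u₁ u₂ + s • cayleyD K u₁ u₂) = -s ^ 3 := by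
  simpa using cayleyF_smul_cayleyP_add_smul_cayleyD u₁ u₂ 1 s

theorem cayleyF_cayleyD : cayleyF (cayleyD K u₁ u₂) = -1 := by
  simpa using cayleyF_smul_cayleyP_add_smul_cayleyD u₁ u₂ 0 1

theorem cayleyF_smul_cayleyP (a : K) : cayleyF (a • cayleyP K u₁ u₂) = 0 := by
  simpa using cayleyF_smul_cayleyP_add_smul_cayleyD u₁ u₂ a 0

variable {u₁ u₂}

theorem cayleyF_eq_zero_iff_mem_span_cayleyP {x : Fin 4 → K} (hx : x ∈ oscTang K u₁ u₂) :
    cayleyF x = 0 ↔ x ∈ Submodule.span K {cayleyP K u₁ u₂} := by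
  rw [Submodule.mem_span_singleton]
  constructor
  · obtain ⟨a, s, rfl⟩ := Submodule.mem_span_pair.1 hx
    intro hf
    have hs : s = 0 := by simpa [cayleyF_smul_cayleyP_add_smul_cayleyD] using hf
    exact ⟨a, by simp [hs]⟩
  · rintro ⟨a, rfl⟩
    exact cayleyF_smul_cayleyP u₁ u₂ a

end OsculatingTangent

/-- `f(P(u₁,u₂) + s·d(u₁,u₂)) = −s³`, `f(d(u₁,u₂)) = −1`, and the
nonzero vectors of `ℓ(u₁,u₂)` lying on the Cayley surface are exactly the nonzero
scalar multiples of `P(u₁,u₂)`. -/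
theorem oscTang_meets_cayley_once (K : Type*) [Field K] (u₁ u₂ : K) :
    (∀ s : K, cayleyF (cayleyP K u₁ u₂ + s • cayleyD K u₁ u₂) = -s ^ 3) ∧
      cayleyF (cayleyD K u₁ u₂) = -1 ∧
      (∀ x ∈ oscTang K u₁ u₂, x ≠ 0 →
        (cayleyF x = 0 ↔ ∃ t : K, t ≠ 0 ∧ x = t • cayleyP K u₁ u₂)) := by
  refine ⟨cayleyF_cayleyP_add_smul_cayleyD u₁ u₂, cayleyF_cayleyD u₁ u₂, fun x hx hx0 => ?_⟩
  rw [cayleyF_eq_zero_iff_mem_span_cayleyP hx, Submodule.mem_span_singleton]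
  constructor
  · rintro ⟨t, rfl⟩
    exact ⟨t, left_ne_zero_of_smul hx0, rfl⟩
  · rintro ⟨t, -, rfl⟩
    exact ⟨t, rfl⟩
end

section
/- Let K be a field of characteristic ≠ 3. A nonzero vector y = (y₀₁, y₀₂, y₀₃, y₁₂, y₁₃, y₂₃) ∈ K⁶ satisfies the four equations h₁(y) = 3y₀₁(y₁₂ + y₀₃) − y₀₂² = 0, h₂(y) = 3y₀₂y₁₃ − (y₁₂ + y₀₃)² = 0, h₃(y) = 9y₀₁y₁₃ − y₀₂(y₁₂ + y₀₃) = 0 and k(y) = y₀₁y₂₃ − y₀₂y₁₃ + y₀₃y₁₂ = 0 if and only if y is a nonzero scalar multiple of π(u₁,u₂) for some (u₁,u₂) ∈ K², or y = (0,0,0,0,a,b) for some (a,b) ≠ (0,0). (Hence the Klein image of O together with the pencil of lines in the plane x₀ = 0 through the point (0,0,0,1) equals the intersection of the variety V(h₁,h₂,h₃) with the Klein quadric.) -/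
/-- Plücker coordinate vector (ordered `y₀₁,y₀₂,y₀₃,y₁₂,y₁₃,y₂₃`) of the osculating
tangent `ℓ(u₁,u₂)` of the Cayley surface. -/
def piBW (K : Type*) [Field K] (u₁ u₂ : K) : Fin 6 → K :=
  ![1, 3 * u₁, u₂, 3 * u₁ ^ 2 - u₂, u₁ ^ 3, 3 * u₁ ^ 4 - 3 * u₁ ^ 2 * u₂ + u₂ ^ 2]

/-- The quadratic form `k(y) = y₀₁y₂₃ − y₀₂y₁₃ + y₀₃y₁₂` of the Klein quadric. -/
def kleinK {K : Type*} [Field K] (y : Fin 6 → K) : K :=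
  y 0 * y 5 - y 1 * y 4 + y 2 * y 3

/-- The form `h₁(y) = 3y₀₁(y₁₂ + y₀₃) − y₀₂²`. -/
def bwH1 {K : Type*} [Field K] (y : Fin 6 → K) : K :=
  3 * y 0 * (y 3 + y 2) - (y 1) ^ 2

/-- The form `h₂(y) = 3y₀₂y₁₃ − (y₁₂ + y₀₃)²`. -/
def bwH2 {K : Type*} [Field K] (y : Fin 6 → K) : K :=
  3 * y 1 * y 4 - (y 3 + y 2) ^ 2

/-- The form `h₃(y) = 9y₀₁y₁₃ − y₀₂(y₁₂ + y₀₃)`. -/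
def bwH3 {K : Type*} [Field K] (y : Fin 6 → K) : K :=
  9 * y 0 * y 4 - y 1 * (y 3 + y 2)

/-!
Write `s = y₁₂ + y₀₃`. The forms `h₁, h₃, h₂` are the `2 × 2` minors of the matrix with rows
`(3y₀₁, y₀₂, s)` and `(y₀₂, s, 3y₁₃)`, so when `3 ≠ 0` they cut out the cone over a twisted cubic.
Where `y₀₁ ≠ 0`, this cone forces `(3y₀₁, y₀₂, s, 3y₁₃) = 3y₀₁ (1, u₁, u₁², u₁³)`; the coordinate
`y₀₃` remains free and becomes `y₀₁ u₂`, and the equation of the Klein quadric determines `y₂₃`.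
Where `y₀₁ = 0`, the cone forces `y₀₂ = s = 0`, and then the Klein form is `-y₀₃²`.
-/

section CommGroupWithZero

variable {G : Type*} [CommGroupWithZero G]

lemma exists_twistedCubic_parameter {a b c d : G} (ha : a ≠ 0) (hac : a * c = b ^ 2)
    (had : a * d = b * c) : ∃ u, b = a * u ∧ c = a * u ^ 2 ∧ d = a * u ^ 3 := by
  obtain ⟨u, rfl⟩ : ∃ u, b = a * u := ⟨b / a, (mul_div_cancel₀ b ha).symm⟩
  obtain rfl : c = a * u ^ 2 := mul_left_cancel₀ ha (by rw [hac, mul_pow, sq a, mul_assoc])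
  exact ⟨u, rfl, rfl, mul_left_cancel₀ ha (by rw [had, mul_assoc, mul_left_comm u, pow_succ' u 2])⟩

end CommGroupWithZero

section Field

variable {K : Type*} [Field K] {y : Fin 6 → K}

lemma bwH1_smul (t : K) (y : Fin 6 → K) : bwH1 (t • y) = t ^ 2 * bwH1 y := by
  simp only [bwH1, Pi.smul_apply, smul_eq_mul]
  ring

lemma bwH2_smul (t : K) (y : Fin 6 → K) : bwH2 (t • y) = t ^ 2 * bwH2 y := by
  simp only [bwH2, Pi.smul_apply, smul_eq_mul]
  ring

lemma bwH3_smul (t : K) (y : Fin 6 → K) : bwH3 (t • y) = t ^ 2 * bwH3 y := by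
  simp only [bwH3, Pi.smul_apply, smul_eq_mul]
  ring

lemma kleinK_smul (t : K) (y : Fin 6 → K) : kleinK (t • y) = t ^ 2 * kleinK y := by
  simp only [kleinK, Pi.smul_apply, smul_eq_mul]
  ring

variable (K) in
/-- The intersection of `V(h₁, h₂, h₃)` with the Klein quadric, encoded as its affine cone in `K⁶`
(so it contains `0`). -/
def bwVariety : Set (Fin 6 → K) :=
  {y | bwH1 y = 0 ∧ bwH2 y = 0 ∧ bwH3 y = 0 ∧ kleinK y = 0}

lemma smul_mem_bwVariety (t : K) (hy : y ∈ bwVariety K) : t • y ∈ bwVariety K := by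
  obtain ⟨h₁, h₂, h₃, hk⟩ := hy
  refine ⟨?_, ?_, ?_, ?_⟩
  · rw [bwH1_smul, h₁, mul_zero]
  · rw [bwH2_smul, h₂, mul_zero]
  · rw [bwH3_smul, h₃, mul_zero]
  · rw [kleinK_smul, hk, mul_zero]

lemma piBW_mem_bwVariety (u₁ u₂ : K) : piBW K u₁ u₂ ∈ bwVariety K := by
  simp only [bwVariety, Set.mem_ofPred_eq, bwH1, bwH2, bwH3, kleinK, piBW, Matrix.cons_val]
  refine ⟨?_, ?_, ?_, ?_⟩ <;> ring

lemma pencil_mem_bwVariety (a b : K) : ![0, 0, 0, 0, a, b] ∈ bwVariety K := by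
  simp [bwVariety, bwH1, bwH2, bwH3, kleinK]

lemma eq_pencil_of_mem_bwVariety (hy : y ∈ bwVariety K) (hy₀ : y 0 = 0) :
    y = ![0, 0, 0, 0, y 4, y 5] := by
  obtain ⟨h₁, h₂, -, hk⟩ := hy
  simp only [bwH1, bwH2, kleinK] at h₁ h₂ hk
  have hy₁ : y 1 = 0 := by simpa [hy₀] using h₁
  have hs : y 3 + y 2 = 0 := by simpa [hy₁] using h₂
  have hy₂ : y 2 = 0 := by
    have : y 2 ^ 2 = 0 := by linear_combination y 5 * hy₀ - y 4 * hy₁ + y 2 * hs - hk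
    exact eq_zero_of_pow_eq_zero this
  have hy₃ : y 3 = 0 := by simpa [hy₂] using hs
  ext i
  fin_cases i <;> simp [hy₀, hy₁, hy₂, hy₃]

lemma exists_eq_piBW_of_mem_bwVariety (hthree : (3 : K) ≠ 0) (hy : y ∈ bwVariety K)
    (hy₀ : y 0 = 1) : ∃ u₁ u₂, y = piBW K u₁ u₂ := by
  obtain ⟨h₁, -, h₃, hk⟩ := hy
  simp only [bwH1, bwH3, kleinK, hy₀] at h₁ h₃ hk
  obtain ⟨u, hy₁, hs, hy₄⟩ : ∃ u, y 1 = 3 * u ∧ y 3 + y 2 = 3 * u ^ 2 ∧ 3 * y 4 = 3 * u ^ 3 :=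
    exists_twistedCubic_parameter hthree (by linear_combination h₁) (by linear_combination h₃)
  replace hy₄ : y 4 = u ^ 3 := mul_left_cancel₀ hthree hy₄
  have hy₃ : y 3 = 3 * u ^ 2 - y 2 := eq_sub_of_add_eq hs
  have hy₅ : y 5 = 3 * u ^ 4 - 3 * u ^ 2 * y 2 + y 2 ^ 2 := by
    rw [hy₁, hy₃, hy₄] at hk
    linear_combination hk
  refine ⟨u, y 2, ?_⟩
  ext i
  fin_cases i <;> simp [piBW, hy₀, hy₁, hy₃, hy₄, hy₅]

lemma exists_eq_smul_piBW_of_mem_bwVariety (hthree : (3 : K) ≠ 0) (hy : y ∈ bwVariety K)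
    (hy₀ : y 0 ≠ 0) : ∃ u₁ u₂, y = y 0 • piBW K u₁ u₂ := by
  obtain ⟨u₁, u₂, hu⟩ := exists_eq_piBW_of_mem_bwVariety hthree
    (smul_mem_bwVariety (y 0)⁻¹ hy) (inv_mul_cancel₀ hy₀)
  exact ⟨u₁, u₂, (inv_smul_eq_iff₀ hy₀).mp hu⟩

end Field

/-- for `char K ≠ 3`, a nonzero `y ∈ K⁶` satisfies
`h₁(y) = h₂(y) = h₃(y) = k(y) = 0` iff `y` is a nonzero scalar multiple of some
`π(u₁,u₂)`, or `y = (0,0,0,0,a,b)` with `(a,b) ≠ (0,0)`. -/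
theorem bw_klein_image_eq_variety (K : Type*) [Field K] (hchar : ringChar K ≠ 3)
    (y : Fin 6 → K) (hy : y ≠ 0) :
    (bwH1 y = 0 ∧ bwH2 y = 0 ∧ bwH3 y = 0 ∧ kleinK y = 0) ↔
      ((∃ t : K, t ≠ 0 ∧ ∃ u₁ u₂ : K, y = t • piBW K u₁ u₂) ∨
        (∃ a b : K, (a, b) ≠ (0, 0) ∧ y = ![0, 0, 0, 0, a, b])) := by
  have hthree : (3 : K) ≠ 0 := fun h ↦
    hchar (CharP.ringChar_of_prime_eq_zero Nat.prime_three (by exact_mod_cast h))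
  change y ∈ bwVariety K ↔ _
  constructor
  · intro hmem
    by_cases hy₀ : y 0 = 0
    · have hpencil := eq_pencil_of_mem_bwVariety hmem hy₀
      refine Or.inr ⟨y 4, y 5, fun hab ↦ hy ?_, hpencil⟩
      obtain ⟨hy₄, hy₅⟩ := Prod.mk.inj hab
      rw [hpencil, hy₄, hy₅]
      simp
    · exact Or.inl ⟨y 0, hy₀, exists_eq_smul_piBW_of_mem_bwVariety hthree hmem hy₀⟩
  · rintro (⟨t, -, u₁, u₂, rfl⟩ | ⟨a, b, -, rfl⟩)
    · exact smul_mem_bwVariety t (piBW_mem_bwVariety u₁ u₂)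
    · exact pencil_mem_bwVariety a b
end

section
/- Let K be an infinite field of characteristic ≠ 3, and let h be a homogeneous polynomial in six variables over K such that h(π(u₁,u₂)) = 0 for all (u₁,u₂) ∈ K² and h(0,0,0,0,0,1) = 0 (i.e., h vanishes on the Klein image of the Betten–Walker line set O). Then h(0,0,0,0,a,b) = 0 for all a, b ∈ K (h vanishes on the Klein image of the whole pencil of lines in the plane x₀ = 0 with centre (0,0,0,1)). -/
/-!
For `t ≠ 0`, rescaling `π(t⁻¹, v t⁻²)` by `a t³` gives the vector
`(a t³, 3 a t², a t v, a t (3 - v), a, a (v² - 3 v + 3) / t)`. If `a, b ≠ 0` and `t` is the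
multiple of `v² - 3 v + 3` that makes the last entry equal to `b`, this is a curve with polynomial
parameter `v` on which the form vanishes wherever `t ≠ 0`, hence identically. At a root of
`v² - 3 v + 3`, possibly in an extension of `K`, the curve passes through the rational point
`(0, 0, 0, 0, a, b)`. The points with `a = 0` or `b = 0` lie in the closure of the others.
-/

open Polynomial

theorem eval_smul_of_isHomogeneous {σ R : Type*} [CommSemiring R] {n : ℕ} {h : MvPolynomial σ R}
    (hhom : h.IsHomogeneous n) (r : R) (x : σ → R) :
    MvPolynomial.eval (r • x) h = r ^ n * MvPolynomial.eval x h := by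
  simp only [MvPolynomial.eval_eq, Finset.mul_sum]
  refine Finset.sum_congr rfl fun d hd ↦ ?_
  have degree_eq : ∑ i ∈ d.support, d i = n := by
    rw [← Finsupp.degree_apply, Finsupp.degree_eq_weight_one]
    exact hhom (MvPolynomial.mem_support_iff.mp hd)
  simp only [Pi.smul_apply, smul_eq_mul, mul_pow, Finset.prod_mul_distrib,
    Finset.prod_pow_eq_pow_sum, degree_eq]
  ring

section Curve

variable {σ R : Type*} [CommRing R] [IsDomain R] [Infinite R] {h : MvPolynomial σ R}
  {γ : σ → R[X]} {q : R[X]}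

theorem aeval_curve_eq_zero (hq : q ≠ 0)
    (hγ : ∀ x, q.eval x ≠ 0 → MvPolynomial.eval (fun i ↦ (γ i).eval x) h = 0) :
    MvPolynomial.aeval γ h = 0 := by
  have eval_aeval (x : R) :
      (MvPolynomial.aeval γ h).eval x = MvPolynomial.eval (fun i ↦ (γ i).eval x) h := by
    simpa only [coe_aeval_eq_eval, MvPolynomial.aeval_eq_eval] using
      MvPolynomial.comp_aeval_apply γ (Polynomial.aeval x) h
  have mul_eq_zero_of_generic : q * MvPolynomial.aeval γ h = 0 := by
    refine Polynomial.funext fun x ↦ ?_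
    rw [eval_mul, eval_aeval, eval_zero, mul_eq_zero]
    exact or_iff_not_imp_left.mpr (hγ x)
  exact (mul_eq_zero.mp mul_eq_zero_of_generic).resolve_left hq

theorem eval_eq_zero_of_curve_through {A : Type*} [CommRing A] [Algebra R A] [FaithfulSMul R A]
    (hq : q ≠ 0) (hγ : ∀ x, q.eval x ≠ 0 → MvPolynomial.eval (fun i ↦ (γ i).eval x) h = 0)
    {α : A} {c : σ → R} (hc : ∀ i, aeval α (γ i) = algebraMap R A (c i)) :
    MvPolynomial.eval c h = 0 := by
  apply FaithfulSMul.algebraMap_injective R A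
  calc algebraMap R A (MvPolynomial.eval c h)
      = MvPolynomial.aeval (fun i ↦ aeval α (γ i)) h := by
        simp only [hc, ← MvPolynomial.aeval_eq_eval]
        exact (MvPolynomial.aeval_algebraMap_apply A c h).symm
    _ = aeval α (MvPolynomial.aeval γ h) :=
        (MvPolynomial.comp_aeval_apply γ (aeval α : R[X] →ₐ[R] A) h).symm
    _ = algebraMap R A 0 := by rw [aeval_curve_eq_zero hq hγ, map_zero, map_zero]

end Curve

section Degeneration

/-- The vector `a t³ • π(t⁻¹, v t⁻²)` with its denominators cleared, its last entry
`a (v² - 3 v + 3) / t` being replaced by an independent `b`. It is defined over any ring so that it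
serves both as a curve over `K[X]` and as a point of that curve. -/
def degenerateTangent {R : Type*} [CommRing R] (a b t v : R) : Fin 6 → R :=
  ![a * t ^ 3, 3 * a * t ^ 2, a * t * v, a * t * (3 - v), a, b]

theorem map_degenerateTangent {R S : Type*} [CommRing R] [CommRing S] (f : R →+* S)
    (a b t v : R) (i : Fin 6) :
    f (degenerateTangent a b t v i) = degenerateTangent (f a) (f b) (f t) (f v) i := by
  fin_cases i <;> simp [degenerateTangent, map_ofNat f 3]

theorem degenerateTangent_zero {R : Type*} [CommRing R] (a b v : R) :
    degenerateTangent a b 0 v = ![0, 0, 0, 0, a, b] := by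
  simp [degenerateTangent]

variable {K : Type*} [Field K]

theorem degenerateTangent_eq_smul_piBW {a b t v : K} (ht : t ≠ 0)
    (hb : b * t = a * (v ^ 2 - 3 * v + 3)) :
    degenerateTangent a b t v = (a * t ^ 3) • piBW K t⁻¹ (v * t⁻¹ ^ 2) := by
  have last_entry : b =
      a * t ^ 3 * (3 * t⁻¹ ^ 4 - 3 * t⁻¹ ^ 2 * (v * t⁻¹ ^ 2) + (v * t⁻¹ ^ 2) ^ 2) := by
    field_simp
    linear_combination hb
  simp only [degenerateTangent, piBW, Matrix.smul_cons, Matrix.smul_empty, smul_eq_mul,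
    Matrix.vecCons_inj, and_true]
  refine ⟨?_, ?_, ?_, ?_, ?_, last_entry⟩ <;> field_simp

theorem eval_pencil_eq_zero_of_ne_zero [Infinite K] {n : ℕ} {h : MvPolynomial (Fin 6) K}
    (hhom : h.IsHomogeneous n) (hosc : ∀ u₁ u₂ : K, MvPolynomial.eval (piBW K u₁ u₂) h = 0)
    {a b : K} (ha : a ≠ 0) (hb : b ≠ 0) :
    MvPolynomial.eval ![0, 0, 0, 0, a, b] h = 0 := by
  let p : K[X] := C 1 * X ^ 2 + C (-3) * X + C 3
  have degree_p : p.degree = 2 := degree_quadratic one_ne_zero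
  have p_ne_zero : p ≠ 0 := fun p_eq_zero ↦ by simp [p_eq_zero] at degree_p
  have : Nontrivial (AdjoinRoot p) := AdjoinRoot.nontrivial p (by simp [degree_p])
  let t : K[X] := C (a / b) * p
  have t_ne_zero : t ≠ 0 := mul_ne_zero (C_ne_zero.mpr (div_ne_zero ha hb)) p_ne_zero
  have root_t : aeval (AdjoinRoot.root p) t = 0 := by
    rw [map_mul, AdjoinRoot.aeval_eq p, AdjoinRoot.mk_self, mul_zero]
  refine eval_eq_zero_of_curve_through (γ := degenerateTangent (C a) (C b) t X)
    (α := AdjoinRoot.root p) t_ne_zero (fun x hx ↦ ?_) (fun i ↦ ?_)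
  · have eval_t : b * t.eval x = a * (x ^ 2 - 3 * x + 3) := by
      simp only [t, p, eval_add, eval_mul, eval_pow, eval_C, eval_X]
      field_simp
      ring
    have curve_eq : (fun i ↦ (degenerateTangent (C a) (C b) t X i).eval x) =
        degenerateTangent a b (t.eval x) x := by
      funext i
      simpa using map_degenerateTangent (evalRingHom x) (C a) (C b) t X i
    rw [curve_eq, degenerateTangent_eq_smul_piBW hx eval_t, eval_smul_of_isHomogeneous hhom, hosc,
      mul_zero]
  · calc aeval (AdjoinRoot.root p) (degenerateTangent (C a) (C b) t X i)
        = degenerateTangent (algebraMap K (AdjoinRoot p) a) (algebraMap K (AdjoinRoot p) b) 0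
            (AdjoinRoot.root p) i := by
          simpa [root_t] using map_degenerateTangent
            (aeval (AdjoinRoot.root p) : K[X] →ₐ[K] AdjoinRoot p).toRingHom (C a) (C b) t X i
      _ = algebraMap K (AdjoinRoot p) (![0, 0, 0, 0, a, b] i) := by
          rw [degenerateTangent_zero]
          fin_cases i <;> simp

end Degeneration

theorem bw_vanishing_form_vanishes_on_pencil_general (K : Type*) [Field K] [Infinite K] (n : ℕ)
    (h : MvPolynomial (Fin 6) K) (hhom : h.IsHomogeneous n)
    (hosc : ∀ u₁ u₂ : K, MvPolynomial.eval (piBW K u₁ u₂) h = 0) :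
    ∀ a b : K, MvPolynomial.eval (![0, 0, 0, 0, a, b] : Fin 6 → K) h = 0 := by
  intro a b
  have generic_ne_zero : (X + C a) * (X + C b) ≠ 0 :=
    mul_ne_zero (X_add_C_ne_zero a) (X_add_C_ne_zero b)
  refine eval_eq_zero_of_curve_through (γ := ![0, 0, 0, 0, X + C a, X + C b]) (α := (0 : K))
    generic_ne_zero (fun x hx ↦ ?_) (fun i ↦ by fin_cases i <;> simp)
  have line_eq : (fun i ↦ (![0, 0, 0, 0, X + C a, X + C b] i : K[X]).eval x) =
      ![0, 0, 0, 0, x + a, x + b] := by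
    funext i
    fin_cases i <;> simp
  rw [eval_mul, eval_add, eval_add, eval_X, eval_C, eval_C, mul_ne_zero_iff] at hx
  rw [line_eq]
  exact eval_pencil_eq_zero_of_ne_zero hhom hosc hx.1 hx.2

/-- over an infinite field of characteristic `≠ 3`, every homogeneous
polynomial in six variables vanishing on the Klein image of the Betten–Walker line
set `O` also vanishes on the Klein image of the pencil of lines in the plane
`x₀ = 0` with centre `(0,0,0,1)`. -/
theorem bw_vanishing_form_vanishes_on_pencil (K : Type*) [Field K] [Infinite K]
    (hchar : ringChar K ≠ 3) (n : ℕ) (h : MvPolynomial (Fin 6) K)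
    (hhom : h.IsHomogeneous n)
    (hosc : ∀ u₁ u₂ : K, MvPolynomial.eval (piBW K u₁ u₂) h = 0)
    (hginf : MvPolynomial.eval (![0, 0, 0, 0, 0, 1] : Fin 6 → K) h = 0) :
    ∀ a b : K, MvPolynomial.eval (![0, 0, 0, 0, a, b] : Fin 6 → K) h = 0 :=
  bw_vanishing_form_vanishes_on_pencil_general K n h hhom hosc
end

section
/- Let K be an infinite field of characteristic ≠ 3, and let S ⊆ K⁶ \ {0} be the cone over the Klein image of the Betten–Walker line set O, namely S = { t·π(u₁,u₂) : t ∈ K \ {0}, (u₁,u₂) ∈ K² } ∪ { t·(0,0,0,0,0,1) : t ∈ K \ {0} }. Then there is no family H of homogeneous polynomials in six variables over K such that S equals the set of nonzero common zeros of H; in other words, the infinite Betten–Walker spread is not an algebraic set of lines. -/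
/-!
A polynomial over an infinite field `K` that vanishes on the cone `{t • π(u₁, u₂) : t ≠ 0}` still
vanishes when `t, u₁, u₂` are taken from an arbitrary extension of `K`. Let `L` be the algebraic
closure of `K` and let `a ∈ L` be a root of `a² - 3a + 3`. Along `u₂ = a u₁²` the last coordinate
`3u₁⁴ - 3u₁²u₂ + u₂²` of `π` vanishes identically, so `u₁³` dominates as `u₁ → ∞`: with `u₁ = s⁻¹`,
the point `s³ • π(s⁻¹, a s⁻²)` is polynomial in `s` and specializes at `s = 0` to
`(0, 0, 0, 0, 1, 0)`. Hence every polynomial over `K` vanishing on the cone vanishes at this point,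
which lies outside the Betten–Walker spread.
-/

/-- The cone over the Klein image of the Betten–Walker line set: all nonzero multiples of the
Plücker vectors of the osculating tangents and of the line `g∞`. -/
def bwCone (K : Type*) [Field K] : Set (Fin 6 → K) :=
  {y | ∃ t : K, t ≠ 0 ∧ ∃ u₁ u₂ : K, y = t • piBW K u₁ u₂} ∪
    {y | ∃ t : K, t ≠ 0 ∧ y = t • (![0, 0, 0, 0, 0, 1] : Fin 6 → K)}

/-- The Plücker vector of the line `span {(0,1,0,0), (0,0,0,1)}`; for infinite `K` it belongs to
the Zariski closure of the Betten–Walker spread but not to the spread itself. -/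
def bwLimit (K : Type*) [Field K] : Fin 6 → K :=
  ![0, 0, 0, 0, 1, 0]

theorem bwLimit_ne_zero (K : Type*) [Field K] : bwLimit K ≠ 0 := fun heq ↦ by
  simpa [bwLimit] using congrFun heq 4

theorem bwLimit_notMem_bwCone (K : Type*) [Field K] : bwLimit K ∉ bwCone K := by
  rintro (⟨t, ht, u₁, u₂, heq⟩ | ⟨t, -, heq⟩)
  · exact ht (by simpa [bwLimit, piBW] using (congrFun heq 0).symm)
  · simpa [bwLimit] using congrFun heq 4

section Extension

open MvPolynomial

theorem aeval_aeval_eq_zero_of_forall_mem_pi {σ τ R A : Type*} [CommRing R] [IsDomain R]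
    [CommSemiring A] [Algebra R A] {s : σ → Set R} (hs : ∀ i, (s i).Infinite)
    {p : τ → MvPolynomial σ R} {h : MvPolynomial τ R}
    (hz : ∀ x ∈ Set.univ.pi s, eval (fun j ↦ eval x (p j)) h = 0) (x : σ → A) :
    aeval (fun j ↦ aeval x (p j)) h = 0 := by
  have pullback_eq_zero : bind₁ p h = 0 :=
    funext_set s hs fun y hy ↦ by
      simpa only [← aeval_eq_eval, aeval_bind₁, map_zero] using hz y hy
  rw [← aeval_bind₁, pullback_eq_zero, map_zero]

/-- The parametrization `(t, u₁, u₂) ↦ t • π(u₁, u₂)` of the cone over the osculating tangents,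
as a tuple of polynomials in `X 0 = t`, `X 1 = u₁`, `X 2 = u₂`. -/
noncomputable def bwConeParam (R : Type*) [CommRing R] : Fin 6 → MvPolynomial (Fin 3) R :=
  (X 0 : MvPolynomial (Fin 3) R) •
    ![1, 3 * X 1, X 2, 3 * X 1 ^ 2 - X 2, X 1 ^ 3,
      3 * X 1 ^ 4 - 3 * X 1 ^ 2 * X 2 + X 2 ^ 2]

theorem aeval_bwConeParam {R F : Type*} [CommRing R] [Field F] [Algebra R F] (x : Fin 3 → F) :
    (fun j ↦ aeval x (bwConeParam R j)) = x 0 • piBW F (x 1) (x 2) := by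
  funext j
  fin_cases j <;> simp [bwConeParam, piBW]

theorem aeval_smul_piBW_eq_zero {K F : Type*} [Field K] [Infinite K] [Field F] [Algebra K F]
    {h : MvPolynomial (Fin 6) K}
    (hz : ∀ t : K, t ≠ 0 → ∀ u₁ u₂ : K, eval (t • piBW K u₁ u₂) h = 0) (t u₁ u₂ : F) :
    aeval (t • piBW F u₁ u₂) h = 0 := by
  let box : Fin 3 → Set K := ![{0}ᶜ, Set.univ, Set.univ]
  have box_infinite : ∀ i, (box i).Infinite := by
    intro i
    fin_cases i
    exacts [(Set.finite_singleton 0).infinite_compl, Set.infinite_univ, Set.infinite_univ]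
  have vanish_on_box :
      ∀ x ∈ Set.univ.pi box, eval (fun j ↦ eval x (bwConeParam K j)) h = 0 := by
    intro x hx
    simp only [← aeval_eq_eval, aeval_bwConeParam]
    exact hz (x 0) (hx 0 (Set.mem_univ 0)) (x 1) (x 2)
  simpa [aeval_bwConeParam] using
    aeval_aeval_eq_zero_of_forall_mem_pi box_infinite vanish_on_box ![t, u₁, u₂]

end Extension

section Curve

open Polynomial

theorem exists_sq_sub_three_mul_add_three_eq_zero (L : Type*) [Field L] [IsAlgClosed L] :
    ∃ a : L, a ^ 2 - 3 * a + 3 = 0 := by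
  have degree_eq : (X ^ 2 - C 3 * X + C 3 : L[X]).degree = 2 := by compute_degree!
  obtain ⟨a, ha⟩ := IsAlgClosed.exists_root (X ^ 2 - C 3 * X + C 3 : L[X])
    (degree_eq ▸ two_ne_zero)
  exact ⟨a, by simpa using ha⟩

theorem cube_smul_piBW_inv {F : Type*} [Field F] {a s : F} (ha : a ^ 2 - 3 * a + 3 = 0)
    (hs : s ≠ 0) :
    s ^ 3 • piBW F s⁻¹ (a * s⁻¹ ^ 2) = ![s ^ 3, 3 * s ^ 2, a * s, (3 - a) * s, 1, 0] := by
  have last_eq_zero :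
      3 * s⁻¹ ^ 4 - 3 * s⁻¹ ^ 2 * (a * s⁻¹ ^ 2) + (a * s⁻¹ ^ 2) ^ 2 = 0 := by
    linear_combination s⁻¹ ^ 4 * ha
  rw [piBW, last_eq_zero]
  funext j
  fin_cases j <;> simp <;> field_simp

/-- The polynomial curve that agrees with `s ↦ s³ • π(s⁻¹, a s⁻²)` for `s ≠ 0` when
`a² - 3a + 3 = 0`; it extends the latter to `s = 0`. -/
noncomputable def bwCurve {R : Type*} [CommRing R] (a : R) : Fin 6 → R[X] :=
  ![X ^ 3, 3 * X ^ 2, C a * X, (3 - C a) * X, 1, 0]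

theorem algebraMap_comp_bwCurve {R F : Type*} [CommRing R] [Nontrivial R] [Field F]
    [Algebra R[X] F] [FaithfulSMul R[X] F] {a : R} (ha : a ^ 2 - 3 * a + 3 = 0) :
    algebraMap R[X] F ∘ bwCurve a =
      algebraMap R[X] F X ^ 3 • piBW F (algebraMap R[X] F X)⁻¹
        (algebraMap R[X] F (C a) * (algebraMap R[X] F X)⁻¹ ^ 2) := by
  have X_ne_zero : algebraMap R[X] F X ≠ 0 := by simp
  have root : algebraMap R[X] F (C a) ^ 2 - 3 * algebraMap R[X] F (C a) + 3 = 0 := by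
    simpa [map_ofNat] using congrArg ((algebraMap R[X] F).comp C) ha
  rw [cube_smul_piBW_inv root X_ne_zero]
  funext j
  fin_cases j <;> simp [bwCurve, map_ofNat]

theorem aeval_zero_bwCurve {K L : Type*} [Field K] [Field L] [Algebra K L] (a : L) :
    (fun j ↦ aeval (0 : L) (bwCurve a j)) = algebraMap K L ∘ bwLimit K := by
  funext j
  fin_cases j <;> simp [bwCurve, bwLimit]

end Curve

theorem eval_bwLimit_eq_zero {K : Type*} [Field K] [Infinite K] {h : MvPolynomial (Fin 6) K}
    (hz : ∀ t : K, t ≠ 0 → ∀ u₁ u₂ : K, MvPolynomial.eval (t • piBW K u₁ u₂) h = 0) :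
    MvPolynomial.eval (bwLimit K) h = 0 := by
  let L := AlgebraicClosure K
  obtain ⟨a, ha⟩ := exists_sq_sub_three_mul_add_three_eq_zero L
  have vanish_on_curve : MvPolynomial.aeval (bwCurve a) h = 0 := by
    rw [← MvPolynomial.aeval_algebraMap_eq_zero_iff (RatFunc L), algebraMap_comp_bwCurve ha]
    exact aeval_smul_piBW_eq_zero hz _ _ _
  have vanish_over_L : MvPolynomial.aeval (algebraMap K L ∘ bwLimit K) h = 0 := by
    let evalZero : Polynomial L →ₐ[K] L := (Polynomial.aeval (0 : L)).restrictScalars K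
    calc MvPolynomial.aeval (algebraMap K L ∘ bwLimit K) h
        = MvPolynomial.aeval (fun j ↦ evalZero (bwCurve a j)) h :=
          congrArg (MvPolynomial.aeval · h) (aeval_zero_bwCurve a).symm
      _ = evalZero (MvPolynomial.aeval (bwCurve a) h) :=
          (MvPolynomial.comp_aeval_apply _ evalZero h).symm
      _ = 0 := by rw [vanish_on_curve, map_zero]
  rwa [MvPolynomial.aeval_algebraMap_eq_zero_iff, MvPolynomial.aeval_eq_eval] at vanish_over_L

theorem bw_spread_not_algebraic_general (K : Type*) [Field K] [Infinite K]
    (H : Set (MvPolynomial (Fin 6) K)) :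
    {y : Fin 6 → K | y ≠ 0 ∧ ∀ h ∈ H, MvPolynomial.eval y h = 0} ≠ bwCone K := by
  intro zeros_eq
  have limit_mem : bwLimit K ∈ {y | y ≠ 0 ∧ ∀ h ∈ H, MvPolynomial.eval y h = 0} := by
    refine ⟨bwLimit_ne_zero K, fun h hh ↦ eval_bwLimit_eq_zero fun t ht u₁ u₂ ↦ ?_⟩
    have tangent_mem : t • piBW K u₁ u₂ ∈ bwCone K := Or.inl ⟨t, ht, u₁, u₂, rfl⟩
    exact (zeros_eq.symm.subset tangent_mem).2 h hh
  exact bwLimit_notMem_bwCone K (zeros_eq.subset limit_mem)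

/-- over an infinite field of characteristic `≠ 3`, the cone `S` over
the Klein image of the Betten–Walker line set `O` is not the set of nonzero common
zeros of any family of homogeneous polynomials in six variables; i.e. the infinite
Betten–Walker spread is not an algebraic set of lines. -/
theorem bw_spread_not_algebraic (K : Type*) [Field K] [Infinite K]
    (hchar : ringChar K ≠ 3) :
    ¬ ∃ H : Set (MvPolynomial (Fin 6) K),
        (∀ h ∈ H, ∃ n : ℕ, h.IsHomogeneous n) ∧
        {y : Fin 6 → K | y ≠ 0 ∧ ∀ h ∈ H, MvPolynomial.eval y h = 0} =
          ({y | ∃ t : K, t ≠ 0 ∧ ∃ u₁ u₂ : K, y = t • piBW K u₁ u₂} ∪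
            {y | ∃ t : K, t ≠ 0 ∧ y = t • (![0, 0, 0, 0, 0, 1] : Fin 6 → K)}) :=
  fun ⟨H, _, zeros_eq⟩ ↦ bw_spread_not_algebraic_general K H zeros_eq
end

section
/- Let K be a field of characteristic 3. Every vector π₃(u₁,u₂) := (1, 0, u₂, −u₂, u₁³, u₂²) (this is the Plücker vector of the osculating tangent ℓ(u₁,u₂) in characteristic 3) and every vector (0,0,0,0,a,b) satisfies the equations y₀₂ = 0, y₀₃ + y₁₂ = 0 and k(y) = y₀₁y₂₃ − y₀₂y₁₃ + y₀₃y₁₂ = 0, which define a parabolic linear congruence N. Moreover, the set of ALL nonzero y ∈ K⁶ satisfying these three equations equals the set of nonzero scalar multiples of the vectors π₃(u₁,u₂), (u₁,u₂) ∈ K², together with the vectors (0,0,0,0,a,b), (a,b) ≠ (0,0), if and only if every element of K has a cube root in K. -/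
/-- Plücker coordinate vector (ordered `y₀₁,y₀₂,y₀₃,y₁₂,y₁₃,y₂₃`) of the osculating
tangent `ℓ(u₁,u₂)` of the Cayley surface in characteristic `3`. -/
def piBW3 (K : Type*) [Field K] (u₁ u₂ : K) : Fin 6 → K :=
  ![1, 0, u₂, -u₂, u₁ ^ 3, u₂ ^ 2]

/-- The three equations `y₀₂ = 0`, `y₀₃ + y₁₂ = 0`, `k(y) = 0` defining the
parabolic linear congruence `N` in characteristic `3`. -/
def inCongN {K : Type*} [Field K] (y : Fin 6 → K) : Prop :=
  y 1 = 0 ∧ y 2 + y 3 = 0 ∧ kleinK y = 0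

/-!
On the solid `y₀₂ = y₀₃ + y₁₂ = 0` the Klein quadric becomes the quadratic cone `y₀₁y₂₃ = y₀₃²`.
The plane `y₀₁ = 0` meets this cone in the pencil `(0,0,0,0,a,b)`. Every other point of the cone is
determined by the ratios `y₀₃ / y₀₁` and `y₁₃ / y₀₁`, which take arbitrary values, and it is of the
form `π₃(u₁,u₂)` up to a scalar exactly when the second ratio is a cube.
-/

section Congruence

variable {K : Type*} [Field K] {y : Fin 6 → K}

theorem inCongN_iff : inCongN y ↔ y 1 = 0 ∧ y 3 = -y 2 ∧ y 0 * y 5 = y 2 ^ 2 := by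
  unfold inCongN kleinK
  refine and_congr_right fun h₁ => ?_
  rw [add_comm, add_eq_zero_iff_eq_neg]
  refine and_congr_right fun h₃ => ?_
  rw [h₁, h₃, ← sub_eq_zero (b := y 2 ^ 2)]
  ring_nf

theorem inCongN.smul (hy : inCongN y) (t : K) : inCongN (t • y) := by
  rw [inCongN_iff] at hy ⊢
  obtain ⟨h₁, h₃, h₅⟩ := hy
  simp only [Pi.smul_apply, smul_eq_mul]
  refine ⟨by rw [h₁, mul_zero], by rw [h₃, mul_neg], ?_⟩
  linear_combination t ^ 2 * h₅

theorem inCongN_piBW3 (u₁ u₂ : K) : inCongN (piBW3 K u₁ u₂) := by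
  simp [inCongN_iff, piBW3]

theorem inCongN_pencil (a b : K) : inCongN ![0, 0, 0, 0, a, b] := by
  simp [inCongN_iff]

theorem exists_eq_pencil_iff :
    (∃ a b : K, (a, b) ≠ (0, 0) ∧ y = ![0, 0, 0, 0, a, b]) ↔ y ≠ 0 ∧ inCongN y ∧ y 0 = 0 := by
  constructor
  · rintro ⟨a, b, hab, rfl⟩
    exact ⟨by simpa using hab, inCongN_pencil a b, rfl⟩
  · rintro ⟨hne, hy, h₀⟩
    obtain ⟨h₁, h₃, h₅⟩ := inCongN_iff.1 hy
    have h₂ : y 2 = 0 := by simpa [h₀] using h₅.symm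
    have hpencil : y = ![0, 0, 0, 0, y 4, y 5] := by
      ext i
      fin_cases i <;> simp [h₀, h₁, h₂, h₃]
    refine ⟨y 4, y 5, fun hab => hne ?_, hpencil⟩
    obtain ⟨ha, hb⟩ := Prod.mk.inj hab
    rw [hpencil, ha, hb]
    simp

theorem exists_eq_smul_piBW3_iff :
    (∃ t : K, t ≠ 0 ∧ ∃ u₁ u₂ : K, y = t • piBW3 K u₁ u₂) ↔
      inCongN y ∧ y 0 ≠ 0 ∧ ∃ r : K, r ^ 3 = y 4 / y 0 := by
  constructor
  · rintro ⟨t, ht, u₁, u₂, rfl⟩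
    exact ⟨(inCongN_piBW3 u₁ u₂).smul t, by simpa [piBW3] using ht, u₁, by simp [piBW3, ht]⟩
  · rintro ⟨hy, h₀, r, hr⟩
    obtain ⟨h₁, h₃, h₅⟩ := inCongN_iff.1 hy
    have h₅' : y 5 = y 0 * (y 2 / y 0) ^ 2 := by
      field_simp
      linear_combination h₅
    refine ⟨y 0, h₀, r, y 2 / y 0, ?_⟩
    ext i
    fin_cases i <;> simp [piBW3, hr, h₁, h₃, h₅', mul_div_cancel₀, h₀]

end Congruence

theorem bw_char_three_congruence_general (K : Type*) [Field K] :
    (∀ u₁ u₂ : K, inCongN (piBW3 K u₁ u₂)) ∧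
      (∀ a b : K, inCongN (![0, 0, 0, 0, a, b] : Fin 6 → K)) ∧
      ((∀ y : Fin 6 → K, y ≠ 0 →
          (inCongN y ↔
            (∃ t : K, t ≠ 0 ∧ ∃ u₁ u₂ : K, y = t • piBW3 K u₁ u₂) ∨
              (∃ a b : K, (a, b) ≠ (0, 0) ∧ y = ![0, 0, 0, 0, a, b]))) ↔
        (∀ a : K, ∃ r : K, r ^ 3 = a)) := by
  refine ⟨inCongN_piBW3, inCongN_pencil, ?_⟩
  simp only [exists_eq_pencil_iff, exists_eq_smul_piBW3_iff]
  constructor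
  · intro hcover a
    have hne : (![1, 0, 0, 0, a, 0] : Fin 6 → K) ≠ 0 := by simp
    have hN : inCongN ![1, 0, 0, 0, a, 0] := by simp [inCongN_iff]
    rcases (hcover _ hne).1 hN with ⟨-, -, hcube⟩ | ⟨-, -, h₀⟩
    · simpa using hcube
    · exact absurd h₀ one_ne_zero
  · intro hroot y hne
    constructor
    · intro hy
      by_cases h₀ : y 0 = 0
      · exact Or.inr ⟨hne, hy, h₀⟩
      · exact Or.inl ⟨hy, h₀, hroot _⟩
    · rintro (⟨hy, -⟩ | ⟨-, hy, -⟩) <;> exact hy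

/-- in characteristic `3` all Plücker vectors `π₃(u₁,u₂)` of osculating
tangents and all vectors `(0,0,0,0,a,b)` lie in the parabolic linear congruence `N`
given by `y₀₂ = 0`, `y₀₃ + y₁₂ = 0`, `k(y) = 0`; moreover `N` consists exactly of
the nonzero scalar multiples of the `π₃(u₁,u₂)` together with the vectors
`(0,0,0,0,a,b)`, `(a,b) ≠ (0,0)`, iff every element of `K` has a cube root. -/
theorem bw_char_three_congruence (K : Type*) [Field K] (hchar : ringChar K = 3) :
    (∀ u₁ u₂ : K, inCongN (piBW3 K u₁ u₂)) ∧
      (∀ a b : K, inCongN (![0, 0, 0, 0, a, b] : Fin 6 → K)) ∧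
      ((∀ y : Fin 6 → K, y ≠ 0 →
          (inCongN y ↔
            (∃ t : K, t ≠ 0 ∧ ∃ u₁ u₂ : K, y = t • piBW3 K u₁ u₂) ∨
              (∃ a b : K, (a, b) ≠ (0, 0) ∧ y = ![0, 0, 0, 0, a, b]))) ↔
        (∀ a : K, ∃ r : K, r ^ 3 = a)) :=
  bw_char_three_congruence_general K
end

section
/- Let K be a field of characteristic 3. A nonzero vector p = (p₀,p₁,p₂,p₃) ∈ K⁴ satisfies all four partial-derivative equations p₁p₂ − 2p₀p₃ = 0, p₀p₂ − 3p₁² = 0, p₀p₁ = 0, p₀² = 0 of the Cayley cubic f together with f(p) ≠ 0 if and only if p₀ = p₂ = 0 and p₁ ≠ 0. Thus the nuclei of the Cayley surface are exactly the points of the line V(X₀,X₂) other than Z = (0,0,0,1). -/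
theorem cayley_partials_eq_zero_iff {R : Type*} [CommRing R] [IsReduced R] {x : Fin 4 → R} :
    (x 1 * x 2 - 2 * x 0 * x 3 = 0 ∧ x 0 * x 2 - 3 * (x 1) ^ 2 = 0 ∧
        x 0 * x 1 = 0 ∧ -((x 0) ^ 2) = 0) ↔
      (x 0 = 0 ∧ x 1 * x 2 = 0 ∧ 3 * (x 1) ^ 2 = 0) := by
  constructor
  · rintro ⟨h₀, h₁, -, h₃⟩
    have hx₀ : x 0 = 0 := eq_zero_of_pow_eq_zero (neg_eq_zero.mp h₃)
    exact ⟨hx₀, by simpa [hx₀] using h₀,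
      by simpa only [hx₀, zero_mul, zero_sub, neg_eq_zero] using h₁⟩
  · rintro ⟨hx₀, h₀, h₁⟩
    simp [hx₀, h₀, h₁]

theorem cayleyF_eq_neg_pow_three_of_apply_zero {K : Type*} [Field K] {x : Fin 4 → K}
    (hx₀ : x 0 = 0) : cayleyF x = -(x 1) ^ 3 := by
  simp [cayleyF, hx₀]

theorem cayleyF_ne_zero_iff_of_apply_zero {K : Type*} [Field K] {x : Fin 4 → K}
    (hx₀ : x 0 = 0) : cayleyF x ≠ 0 ↔ x 1 ≠ 0 := by
  rw [cayleyF_eq_neg_pow_three_of_apply_zero hx₀, neg_ne_zero, pow_ne_zero_iff three_ne_zero]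

theorem cayley_nuclei_char_three_general {K : Type*} [Field K] (p : Fin 4 → K) :
    (p 1 * p 2 - 2 * p 0 * p 3 = 0 ∧ p 0 * p 2 - 3 * (p 1) ^ 2 = 0 ∧
        p 0 * p 1 = 0 ∧ -((p 0) ^ 2) = 0 ∧ cayleyF p ≠ 0) ↔
      ((3 : K) = 0 ∧ p 0 = 0 ∧ p 2 = 0 ∧ p 1 ≠ 0) := by
  constructor
  · rintro ⟨h₀, h₁, h₂, h₃, hF⟩
    obtain ⟨hp₀, hp₁₂, hp₁_sq⟩ := cayley_partials_eq_zero_iff.mp ⟨h₀, h₁, h₂, h₃⟩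
    have hp₁ : p 1 ≠ 0 := (cayleyF_ne_zero_iff_of_apply_zero hp₀).mp hF
    have h_three : (3 : K) = 0 := (mul_eq_zero_iff_right (pow_ne_zero 2 hp₁)).mp hp₁_sq
    have hp₂ : p 2 = 0 := (mul_eq_zero_iff_left hp₁).mp hp₁₂
    exact ⟨h_three, hp₀, hp₂, hp₁⟩
  · rintro ⟨h_three, hp₀, hp₂, hp₁⟩
    obtain ⟨h₀, h₁, h₂, h₃⟩ := cayley_partials_eq_zero_iff.mpr
      ⟨hp₀, mul_eq_zero_of_right _ hp₂, mul_eq_zero_of_left h_three _⟩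
    exact ⟨h₀, h₁, h₂, h₃, (cayleyF_ne_zero_iff_of_apply_zero hp₀).mpr hp₁⟩

/-- in characteristic `3`, a nonzero `p ∈ K⁴` satisfies all four
partial-derivative equations of the Cayley cubic together with `f(p) ≠ 0` iff
`p₀ = p₂ = 0` and `p₁ ≠ 0`; i.e. the nuclei of the Cayley surface are exactly the
points of the line `V(X₀,X₂)` other than `Z = (0,0,0,1)`. -/
theorem cayley_nuclei_char_three (K : Type*) [Field K] (hchar : ringChar K = 3)
    (p : Fin 4 → K) (hp : p ≠ 0) :
    (p 1 * p 2 - 2 * p 0 * p 3 = 0 ∧ p 0 * p 2 - 3 * (p 1) ^ 2 = 0 ∧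
        p 0 * p 1 = 0 ∧ -((p 0) ^ 2) = 0 ∧ cayleyF p ≠ 0) ↔
      (p 0 = 0 ∧ p 2 = 0 ∧ p 1 ≠ 0) := by
  have : CharP K 3 := ringChar.eq_iff.mp hchar
  exact (cayley_nuclei_char_three_general p).trans (and_iff_right (CharP.ofNat_eq_zero K 3))
end

section
/- Let K be a field with at least 4 elements. A 2-dimensional subspace W of K⁴ satisfies f(x) = 0 for all x ∈ W if and only if W = g(s₀,s₁) := span{(s₀², s₀s₁, s₁², 0), (0, 0, s₀, s₁)} for some (s₀,s₁) ∈ K² \ {(0,0)}. In other words, the lines contained in the Cayley surface F are exactly its generators g(s₀,s₁). -/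
/-- The generator `g(s₀,s₁) = span{(s₀²,s₀s₁,s₁²,0), (0,0,s₀,s₁)}` of the Cayley
surface. -/
def cayleyGen (K : Type*) [Field K] (s₀ s₁ : K) : Submodule K (Fin 4 → K) :=
  Submodule.span K {![s₀ ^ 2, s₀ * s₁, s₁ ^ 2, 0], ![0, 0, s₀, s₁]}

/-!
The plane `x₀ = 0` meets the Cayley surface in the (triple) line `x₀ = x₁ = 0`, which is the
generator `g(0, 1)`. Every point `w` of the surface off this plane lies on the generator
`g(w₀, w₁)`. A line on the surface through `w` meets the plane in a point `v` with `v₀ = v₁ = 0`,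
and then `f(w + v) = f(w) + w₀ (w₁ v₂ - w₀ v₃)` forces `v` onto `g(w₀, w₁)` as well. So every
subspace on which `f` vanishes lies in a generator, and a dimension count does the rest.
-/

section

variable {K : Type*} [Field K]
  {s₀ s₁ : K} {x v w : Fin 4 → K} {W : Submodule K (Fin 4 → K)}

theorem apply_one_eq_zero_of_cayleyF_eq_zero (hx : cayleyF x = 0) (hx₀ : x 0 = 0) :
    x 1 = 0 := by
  simpa [cayleyF, hx₀] using hx

theorem cayleyF_add_of_apply_eq_zero (hv₀ : v 0 = 0) (hv₁ : v 1 = 0) :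
    cayleyF (w + v) = cayleyF w + w 0 * (w 1 * v 2 - w 0 * v 3) := by
  simp only [cayleyF, Pi.add_apply, hv₀, hv₁]
  ring

theorem mem_cayleyGen : x ∈ cayleyGen K s₀ s₁ ↔ ∃ a b : K,
    x 0 = a * s₀ ^ 2 ∧ x 1 = a * (s₀ * s₁) ∧ x 2 = a * s₁ ^ 2 + b * s₀ ∧ x 3 = b * s₁ := by
  simp [cayleyGen, Submodule.mem_span_pair, funext_iff, Fin.forall_fin_succ, eq_comm]

theorem mem_cayleyGen_zero_one : x ∈ cayleyGen K 0 1 ↔ x 0 = 0 ∧ x 1 = 0 := by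
  simp [mem_cayleyGen]

theorem mem_cayleyGen_iff_of_ne_zero (hs : s₀ ≠ 0) : x ∈ cayleyGen K s₀ s₁ ↔
    s₁ * x 0 = s₀ * x 1 ∧ s₀ * (s₁ * x 2 - s₀ * x 3) = s₁ ^ 2 * x 1 := by
  rw [mem_cayleyGen]
  constructor
  · rintro ⟨a, b, h₀, h₁, h₂, h₃⟩
    rw [h₀, h₁, h₂, h₃]
    constructor <;> ring
  · rintro ⟨h₁, h₃⟩
    refine ⟨x 0 / s₀ ^ 2, (x 2 - x 0 / s₀ ^ 2 * s₁ ^ 2) / s₀, ?_, ?_, ?_, ?_⟩ <;> field_simp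
    · linear_combination -h₁
    · ring
    · linear_combination s₁ ^ 2 * h₁ - s₀ * h₃

theorem cayleyF_eq_zero_of_mem_cayleyGen (hx : x ∈ cayleyGen K s₀ s₁) : cayleyF x = 0 := by
  obtain ⟨a, b, h₀, h₁, h₂, h₃⟩ := mem_cayleyGen.1 hx
  rw [cayleyF, h₀, h₁, h₂, h₃]
  ring

theorem linearIndependent_cayleyGen (hs : (s₀, s₁) ≠ (0, 0)) :
    LinearIndependent K ![![s₀ ^ 2, s₀ * s₁, s₁ ^ 2, 0], ![0, 0, s₀, s₁]] := by
  rw [LinearIndependent.pair_iff]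
  intro a b hab
  have h₀ : a = 0 ∨ s₀ = 0 := by simpa using congrFun hab 0
  have h₂ : a * s₁ ^ 2 + b * s₀ = 0 := by simpa using congrFun hab 2
  have h₃ : b = 0 ∨ s₁ = 0 := by simpa using congrFun hab 3
  by_cases hs₀ : s₀ = 0
  · have hs₁ : s₁ ≠ 0 := by simpa [hs₀] using hs
    exact ⟨by simpa [hs₀, hs₁] using h₂, h₃.resolve_right hs₁⟩
  · have ha : a = 0 := h₀.resolve_right hs₀
    exact ⟨ha, by simpa [ha, hs₀] using h₂⟩

theorem finrank_cayleyGen (hs : (s₀, s₁) ≠ (0, 0)) :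
    Module.finrank K (cayleyGen K s₀ s₁) = 2 := by
  rw [cayleyGen, ← Matrix.range_cons_cons_empty _ _ ![],
    finrank_span_eq_card (linearIndependent_cayleyGen hs), Fintype.card_fin]

theorem mem_cayleyGen_self_of_cayleyF_eq_zero (hw : cayleyF w = 0)
    (hw₀ : w 0 ≠ 0) : w ∈ cayleyGen K (w 0) (w 1) := by
  refine (mem_cayleyGen_iff_of_ne_zero hw₀).2 ⟨mul_comm _ _, ?_⟩
  rw [cayleyF] at hw
  linear_combination hw

theorem mem_cayleyGen_of_cayleyF_add_eq_zero (hw₀ : w 0 ≠ 0) (hw : cayleyF w = 0)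
    (hv : cayleyF v = 0) (hwv : cayleyF (w + v) = 0) (hv₀ : v 0 = 0) :
    v ∈ cayleyGen K (w 0) (w 1) := by
  have hv₁ : v 1 = 0 := apply_one_eq_zero_of_cayleyF_eq_zero hv hv₀
  rw [cayleyF_add_of_apply_eq_zero hv₀ hv₁, hw, zero_add] at hwv
  rw [mem_cayleyGen_iff_of_ne_zero hw₀, hv₀, hv₁, hwv]
  simp

theorem le_cayleyGen_zero_one (hW : ∀ x ∈ W, cayleyF x = 0) (hW₀ : ∀ x ∈ W, x 0 = 0) :
    W ≤ cayleyGen K 0 1 := fun x hx ↦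
  mem_cayleyGen_zero_one.2
    ⟨hW₀ x hx, apply_one_eq_zero_of_cayleyF_eq_zero (hW x hx) (hW₀ x hx)⟩

theorem le_cayleyGen_of_mem (hW : ∀ x ∈ W, cayleyF x = 0) (hw : w ∈ W) (hw₀ : w 0 ≠ 0) :
    W ≤ cayleyGen K (w 0) (w 1) := by
  intro x hx
  set v := w 0 • x - x 0 • w with hv_def
  have hv : v ∈ W := W.sub_mem (W.smul_mem _ hx) (W.smul_mem _ hw)
  have hv₀ : v 0 = 0 := by simp [hv_def, mul_comm]
  have hv_gen : v ∈ cayleyGen K (w 0) (w 1) :=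
    mem_cayleyGen_of_cayleyF_add_eq_zero hw₀ (hW w hw) (hW v hv) (hW _ (W.add_mem hw hv)) hv₀
  have hw_gen : w ∈ cayleyGen K (w 0) (w 1) :=
    mem_cayleyGen_self_of_cayleyF_eq_zero (hW w hw) hw₀
  rwa [hv_def, Submodule.sub_mem_iff_left _ (Submodule.smul_mem _ _ hw_gen),
    Submodule.smul_mem_iff _ hw₀] at hv_gen

theorem forall_mem_cayleyF_eq_zero_iff_exists_le_cayleyGen :
    (∀ x ∈ W, cayleyF x = 0) ↔ ∃ s₀ s₁ : K, (s₀, s₁) ≠ (0, 0) ∧ W ≤ cayleyGen K s₀ s₁ := by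
  refine ⟨fun hW ↦ ?_, fun ⟨_, _, _, hle⟩ x hx ↦ cayleyF_eq_zero_of_mem_cayleyGen (hle hx)⟩
  by_cases hW₀ : ∀ x ∈ W, x 0 = 0
  · exact ⟨0, 1, by simp, le_cayleyGen_zero_one hW hW₀⟩
  · push Not at hW₀
    obtain ⟨w, hw, hw₀⟩ := hW₀
    exact ⟨w 0, w 1, by simp [hw₀], le_cayleyGen_of_mem hW hw hw₀⟩

theorem le_cayleyGen_iff_eq (hs : (s₀, s₁) ≠ (0, 0)) (hW : Module.finrank K W = 2) :
    W ≤ cayleyGen K s₀ s₁ ↔ W = cayleyGen K s₀ s₁ :=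
  ⟨fun hle ↦ Submodule.eq_of_le_of_finrank_eq hle (hW.trans (finrank_cayleyGen hs).symm), le_of_eq⟩

theorem cayley_lines_are_generators_general (W : Submodule K (Fin 4 → K))
    (hW : Module.finrank K W = 2) :
    (∀ x ∈ W, cayleyF x = 0) ↔
      ∃ s₀ s₁ : K, (s₀, s₁) ≠ (0, 0) ∧ W = cayleyGen K s₀ s₁ := by
  rw [forall_mem_cayleyF_eq_zero_iff_exists_le_cayleyGen]
  exact exists₂_congr fun _ _ ↦ and_congr_right fun hs ↦ le_cayleyGen_iff_eq hs hW

end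

/-- over a field with at least 4 elements, a 2-dimensional subspace
`W ⊆ K⁴` lies entirely on the Cayley surface iff `W` is a generator `g(s₀,s₁)`;
i.e. the lines contained in the Cayley surface are exactly its generators. -/
theorem cayley_lines_are_generators (K : Type*) [Field K]
    (hK : ∃ s : Finset K, 4 ≤ s.card)
    (W : Submodule K (Fin 4 → K)) (hW : Module.finrank K W = 2) :
    (∀ x ∈ W, cayleyF x = 0) ↔
      ∃ s₀ s₁ : K, (s₀, s₁) ≠ (0, 0) ∧ W = cayleyGen K s₀ s₁ :=
  cayley_lines_are_generators_general W hW
end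

section
/- Let K be a field. For a, b ∈ K and c ∈ K \ {0}, let M_{a,b,c} be the 4×4 matrix with rows (1,0,0,0), (a,c,0,0), (b,3ac,c²,0), (ab−a³, bc, ac², c³). Then the set G = { M_{a,b,c} : a,b ∈ K, c ∈ K \ {0} } is a subgroup of GL₄(K), for every x ∈ K⁴ one has f(M_{a,b,c}·x) = c³·f(x) (so each M_{a,b,c} induces a projective collineation of P₃(K) mapping the Cayley surface F onto itself), and M_{u₁,u₂,1}·(1,0,0,0) = P(u₁,u₂) for all u₁,u₂ ∈ K (so G acts transitively on the affine points of F). -/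
/-- The matrix `M_{a,b,c}` with rows `(1,0,0,0)`, `(a,c,0,0)`, `(b,3ac,c²,0)`,
`(ab−a³,bc,ac²,c³)`. -/
def cayleyM {K : Type*} [Field K] (a b c : K) : Matrix (Fin 4) (Fin 4) K :=
  !![1, 0, 0, 0;
     a, c, 0, 0;
     b, 3 * a * c, c ^ 2, 0;
     a * b - a ^ 3, b * c, a * c ^ 2, c ^ 3]

/-!
On the affine points `P(u₁,u₂)` the matrix `M_{a,b,c}` acts through the triangular substitution
`(u₁,u₂) ↦ (a + c u₁, b + 3ac u₁ + c² u₂)` of the parameters, and it multiplies the defect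
`u₁u₂ - u₁³ - u₃` of an arbitrary affine point `(1,u₁,u₂,u₃)` by `c³`. The triples `(a,b,c)` compose
like these substitutions. Solving for the preimage of `(0,0)` gives the inverse, and since
`P(0,0) = (1,0,0,0)`, the substitution with `c = 1` moves the base point to `P(a,b)`.
-/

section

variable {K : Type*} [Field K]

theorem cayleyM_mulVec (a b c : K) (x : Fin 4 → K) :
    (cayleyM a b c).mulVec x =
      ![x 0, a * x 0 + c * x 1, b * x 0 + 3 * a * c * x 1 + c ^ 2 * x 2,
        (a * b - a ^ 3) * x 0 + b * c * x 1 + a * c ^ 2 * x 2 + c ^ 3 * x 3] := by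
  ext i
  fin_cases i <;> simp [cayleyM, Matrix.mulVec, dotProduct, Fin.sum_univ_four]

theorem cayleyF_cayleyM_mulVec (a b c : K) (x : Fin 4 → K) :
    cayleyF ((cayleyM a b c).mulVec x) = c ^ 3 * cayleyF x := by
  simp only [cayleyM_mulVec, cayleyF, Matrix.cons_val]
  ring

theorem cayleyM_mulVec_cayleyP (a b c u₁ u₂ : K) :
    (cayleyM a b c).mulVec (cayleyP K u₁ u₂) =
      cayleyP K (a + c * u₁) (b + 3 * a * c * u₁ + c ^ 2 * u₂) := by
  simp only [cayleyM_mulVec, cayleyP, Matrix.cons_val, Matrix.vecCons_inj, mul_one, true_and,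
    and_true]
  ring

theorem cayleyP_zero_zero : cayleyP K 0 0 = ![1, 0, 0, 0] := by
  simp [cayleyP]

theorem cayleyM_one_mulVec_eq_cayleyP (u₁ u₂ : K) :
    (cayleyM u₁ u₂ 1).mulVec ![1, 0, 0, 0] = cayleyP K u₁ u₂ := by
  simpa [cayleyP_zero_zero] using cayleyM_mulVec_cayleyP u₁ u₂ 1 0 0

theorem cayleyM_zero_zero_one : cayleyM (0 : K) 0 1 = 1 := by
  ext i j
  fin_cases i <;> fin_cases j <;> simp [cayleyM]

theorem cayleyM_mul (a b c a' b' c' : K) :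
    cayleyM a b c * cayleyM a' b' c' =
      cayleyM (a + c * a') (b + 3 * a * c * a' + c ^ 2 * b') (c * c') := by
  apply Matrix.mulVec_injective
  ext1 x
  simp only [← Matrix.mulVec_mulVec, cayleyM_mulVec, Matrix.cons_val, Matrix.vecCons_inj,
    and_true, true_and]
  refine ⟨?_, ?_, ?_⟩ <;> ring

theorem cayleyM_mul_eq_one (a b : K) {c : K} (hc : c ≠ 0) :
    cayleyM a b c * cayleyM (-a / c) ((3 * a ^ 2 - b) / c ^ 2) c⁻¹ = 1 := by
  have h₁ : a + c * (-a / c) = 0 := by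
    field_simp
    ring
  have h₂ : b + 3 * a * c * (-a / c) + c ^ 2 * ((3 * a ^ 2 - b) / c ^ 2) = 0 := by
    field_simp
    ring
  rw [cayleyM_mul, h₁, h₂, mul_inv_cancel₀ hc, cayleyM_zero_zero_one]

theorem isUnit_cayleyM (a b : K) {c : K} (hc : c ≠ 0) : IsUnit (cayleyM a b c) :=
  IsUnit.of_mul_eq_one _ (cayleyM_mul_eq_one a b hc)

end

/-- the matrices `M_{a,b,c}` (with `c ≠ 0`) form a subgroup `G` of
`GL₄(K)` (each is invertible, the identity is among them, and they are closed under
products and inverses), each `M_{a,b,c}` scales the Cayley form by `c³` (hence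
induces a projective collineation preserving the Cayley surface), and
`M_{u₁,u₂,1}·(1,0,0,0)ᵀ = P(u₁,u₂)` (so `G` is transitive on the affine points of
the surface). -/
theorem cayley_collineation_group (K : Type*) [Field K] :
    (∀ a b c : K, c ≠ 0 → IsUnit (cayleyM a b c)) ∧
      cayleyM (0 : K) 0 1 = 1 ∧
      (∀ a b c a' b' c' : K, c ≠ 0 → c' ≠ 0 →
        ∃ a'' b'' c'' : K, c'' ≠ 0 ∧
          cayleyM a b c * cayleyM a' b' c' = cayleyM a'' b'' c'') ∧
      (∀ a b c : K, c ≠ 0 →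
        ∃ a' b' c' : K, c' ≠ 0 ∧ cayleyM a b c * cayleyM a' b' c' = 1) ∧
      (∀ a b c : K, ∀ x : Fin 4 → K,
        cayleyF ((cayleyM a b c).mulVec x) = c ^ 3 * cayleyF x) ∧
      (∀ u₁ u₂ : K, (cayleyM u₁ u₂ 1).mulVec ![1, 0, 0, 0] = cayleyP K u₁ u₂) := by
  exact ⟨fun a b _ hc => isUnit_cayleyM a b hc,
    cayleyM_zero_zero_one,
    fun a b c a' b' c' hc hc' => ⟨_, _, _, mul_ne_zero hc hc', cayleyM_mul a b c a' b' c'⟩,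
    fun a b _ hc => ⟨_, _, _, inv_ne_zero hc, cayleyM_mul_eq_one a b hc⟩,
    cayleyF_cayleyM_mulVec,
    cayleyM_one_mulVec_eq_cayleyP⟩
end

section
/- Let K be a field. A nonzero vector a = (a₀,a₁,a₂,a₃) ∈ K⁴ satisfies a₁a₂a₃ − a₂³ − a₀a₃² = 0 if and only if a is a nonzero scalar multiple either of (2u₁³ − u₁u₂, u₂ − 3u₁², u₁, −1) for some (u₁,u₂) ∈ K² (the coefficient vector of the tangent plane of the Cayley surface F at the affine point P(u₁,u₂)), or of (−s₃, s₂, 0, 0) for some (s₂,s₃) ≠ (0,0) (the coefficient vector of a tangent plane at a point (0,0,s₂,s₃) of the line at infinity of F). Hence the linear bijection (x₀,x₁,x₂,x₃) ↦ (x₃,x₂,x₁,x₀) is a duality of P₃(K) carrying the set of points of the Cayley surface onto the set of its tangent planes, and the set of tangent planes of F is a Cayley surface in the dual projective space. -/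
/-- The "dual" Cayley cubic form `a₁a₂a₃ − a₂³ − a₀a₃²` on coefficient vectors of
planes. -/
def cayleyFdual {K : Type*} [Field K] (a : Fin 4 → K) : K :=
  a 1 * a 2 * a 3 - (a 2) ^ 3 - a 0 * (a 3) ^ 2

/-!
Reversing coordinates turns the dual form into the form `f` itself, so the zeros of the dual form
are read off from the parametrization of the surface: a zero of `f` is either a multiple of some
`P(u₁, u₂)` or lies on the line at infinity. The reversed tangent plane at `P(u₁, u₂)` is
`-P(-u₁, 3u₁² - u₂)`, and `(u₁, u₂) ↦ (-u₁, 3u₁² - u₂)` is an involution, so reversal matches the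
affine points with the tangent planes at affine points.
-/

section CommRing

variable {R : Type*} [CommRing R]

/-- The affine point `P(u₁, u₂)` of the Cayley surface, normalized to have first coordinate `1`. -/
def cayleyPoint (u₁ u₂ : R) : Fin 4 → R :=
  ![1, u₁, u₂, u₁ * u₂ - u₁ ^ 3]

/-- The coefficient vector of the tangent plane of the Cayley surface at `P(u₁, u₂)`, normalized to
have last coefficient `-1`. -/
def cayleyTangentPlane (u₁ u₂ : R) : Fin 4 → R :=
  ![2 * u₁ ^ 3 - u₁ * u₂, u₂ - 3 * u₁ ^ 2, u₁, -1]

theorem cayleyTangentPlane_comp_rev (u₁ u₂ : R) :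
    cayleyTangentPlane u₁ u₂ ∘ Fin.rev = -cayleyPoint (-u₁) (3 * u₁ ^ 2 - u₂) := by
  have h3 : 2 * u₁ ^ 3 - u₁ * u₂ = -(-u₁ * (3 * u₁ ^ 2 - u₂) - (-u₁) ^ 3) := by ring
  ext i
  fin_cases i <;> simp [cayleyTangentPlane, cayleyPoint, Fin.rev, h3]

theorem cayleyPoint_comp_rev (u₁ u₂ : R) :
    cayleyPoint u₁ u₂ ∘ Fin.rev = -cayleyTangentPlane (-u₁) (3 * u₁ ^ 2 - u₂) := by
  ext i
  have h := congrFun (cayleyTangentPlane_comp_rev (-u₁) (3 * u₁ ^ 2 - u₂)) i.rev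
  simpa using (neg_eq_iff_eq_neg.mpr h).symm

theorem exists_smul_cayleyTangentPlane_iff_comp_rev (a : Fin 4 → R) :
    (∃ t : R, t ≠ 0 ∧ ∃ u₁ u₂ : R, a = t • cayleyTangentPlane u₁ u₂) ↔
      ∃ t : R, t ≠ 0 ∧ ∃ u₁ u₂ : R, a ∘ Fin.rev = t • cayleyPoint u₁ u₂ := by
  constructor
  · rintro ⟨t, ht, u₁, u₂, rfl⟩
    refine ⟨-t, neg_ne_zero.mpr ht, -u₁, 3 * u₁ ^ 2 - u₂, ?_⟩
    rw [Pi.smul_comp, cayleyTangentPlane_comp_rev, smul_neg, neg_smul]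
  · rintro ⟨t, ht, u₁, u₂, h⟩
    refine ⟨-t, neg_ne_zero.mpr ht, -u₁, 3 * u₁ ^ 2 - u₂, ?_⟩
    calc a = (a ∘ Fin.rev) ∘ Fin.rev := by simp [Function.comp_assoc, Fin.rev_involutive.comp_self]
      _ = -t • cayleyTangentPlane (-u₁) (3 * u₁ ^ 2 - u₂) := by
        rw [h, Pi.smul_comp, cayleyPoint_comp_rev, smul_neg, neg_smul]

theorem exists_smul_tangentPlane_at_infinity_iff [Nontrivial R] {a : Fin 4 → R} (ha : a ≠ 0) :
    (∃ t : R, t ≠ 0 ∧ ∃ s₂ s₃ : R, (s₂, s₃) ≠ (0, 0) ∧ a = t • ![-s₃, s₂, 0, 0]) ↔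
      a 3 = 0 ∧ a 2 = 0 := by
  constructor
  · rintro ⟨t, -, s₂, s₃, -, rfl⟩
    simp
  · rintro ⟨h3, h2⟩
    have ha' : a = ![a 0, a 1, 0, 0] := by
      ext i
      fin_cases i <;> simp [h2, h3]
    refine ⟨1, one_ne_zero, a 1, -a 0, fun hs => ha ?_, by simpa using ha'⟩
    obtain ⟨h1, h0⟩ : a 1 = 0 ∧ a 0 = 0 := by simpa using hs
    exact ha'.trans (by simp [h0, h1])

end CommRing

section Field

variable {K : Type*} [Field K] {x : Fin 4 → K}

theorem cayleyF_smul (t : K) (x : Fin 4 → K) : cayleyF (t • x) = t ^ 3 * cayleyF x := by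
  simp only [cayleyF, Pi.smul_apply, smul_eq_mul]
  ring

theorem cayleyF_cayleyPoint (u₁ u₂ : K) : cayleyF (cayleyPoint u₁ u₂) = 0 := by
  simp [cayleyF, cayleyPoint]

theorem eq_smul_cayleyPoint (h0 : x 0 ≠ 0) (hx : cayleyF x = 0) :
    x = x 0 • cayleyPoint (x 1 / x 0) (x 2 / x 0) := by
  have h3 : x 3 = x 0 * (x 1 / x 0 * (x 2 / x 0) - (x 1 / x 0) ^ 3) := by
    field_simp
    unfold cayleyF at hx
    linear_combination -hx
  ext i
  fin_cases i <;> simp [cayleyPoint, mul_div_cancel₀, h0, ← h3]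

theorem cayleyF_eq_zero_iff :
    cayleyF x = 0 ↔
      (∃ t : K, t ≠ 0 ∧ ∃ u₁ u₂ : K, x = t • cayleyPoint u₁ u₂) ∨ (x 0 = 0 ∧ x 1 = 0) := by
  constructor
  · intro hx
    by_cases h0 : x 0 = 0
    · exact .inr ⟨h0, by simpa [cayleyF, h0] using hx⟩
    · exact .inl ⟨x 0, h0, x 1 / x 0, x 2 / x 0, eq_smul_cayleyPoint h0 hx⟩
  · rintro (⟨t, -, u₁, u₂, rfl⟩ | ⟨h0, h1⟩)
    · rw [cayleyF_smul, cayleyF_cayleyPoint, mul_zero]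
    · simp [cayleyF, h0, h1]

theorem cayleyFdual_comp_rev (x : Fin 4 → K) : cayleyFdual (x ∘ Fin.rev) = cayleyF x := by
  change x 2 * x 1 * x 0 - x 1 ^ 3 - x 3 * x 0 ^ 2 = x 0 * x 1 * x 2 - x 1 ^ 3 - x 0 ^ 2 * x 3
  ring

theorem cayleyF_comp_rev (a : Fin 4 → K) : cayleyF (a ∘ Fin.rev) = cayleyFdual a := by
  rw [← cayleyFdual_comp_rev, Function.comp_assoc, Fin.rev_involutive.comp_self, Function.comp_id]

end Field

/-- a nonzero `a ∈ K⁴` satisfies `a₁a₂a₃ − a₂³ − a₀a₃² = 0` iff `a` is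
a nonzero scalar multiple of the coefficient vector `(2u₁³−u₁u₂, u₂−3u₁², u₁, −1)`
of the tangent plane at an affine point `P(u₁,u₂)`, or of the coefficient vector
`(−s₃, s₂, 0, 0)` of a tangent plane at a point `(0,0,s₂,s₃)` at infinity; moreover
the linear bijection `(x₀,x₁,x₂,x₃) ↦ (x₃,x₂,x₁,x₀)` carries the Cayley surface
onto the set of its tangent planes, which is thus a Cayley surface in the dual
space. -/
theorem cayley_tangent_planes_dual_surface (K : Type*) [Field K] :
    (∀ a : Fin 4 → K, a ≠ 0 →
      (cayleyFdual a = 0 ↔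
        (∃ t : K, t ≠ 0 ∧ ∃ u₁ u₂ : K,
            a = t • ![2 * u₁ ^ 3 - u₁ * u₂, u₂ - 3 * u₁ ^ 2, u₁, -1]) ∨
          (∃ t : K, t ≠ 0 ∧ ∃ s₂ s₃ : K, (s₂, s₃) ≠ (0, 0) ∧
            a = t • ![-s₃, s₂, 0, 0]))) ∧
      (∀ x : Fin 4 → K, cayleyFdual ![x 3, x 2, x 1, x 0] = cayleyF x) := by
  refine ⟨fun a ha => ?_, cayleyFdual_comp_rev⟩
  calc cayleyFdual a = 0
    _ ↔ cayleyF (a ∘ Fin.rev) = 0 := by rw [cayleyF_comp_rev]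
    _ ↔ (∃ t : K, t ≠ 0 ∧ ∃ u₁ u₂ : K, a ∘ Fin.rev = t • cayleyPoint u₁ u₂) ∨
          (a 3 = 0 ∧ a 2 = 0) := cayleyF_eq_zero_iff
    _ ↔ _ := or_congr (exists_smul_cayleyTangentPlane_iff_comp_rev a).symm
          (exists_smul_tangentPlane_at_infinity_iff ha).symm
end

section
/- Let K be a field and fix s ∈ K. Define the quadratic form Q_s(x) = x₁x₂ − x₀x₃ − 3s·x₁² + 3s²·x₀x₁ − s³·x₀² on K⁴. Then Q_s vanishes on every vector of the osculating tangent ℓ(s,u₂) for every u₂ ∈ K, and on every vector of g∞ = span{(0,0,1,0),(0,0,0,1)}. (Thus the osculating tangents of the Cayley surface at the points of the generator g(1,s), together with g∞, lie on a single quadric — the regulus R⁻(s) on the Lie quadric of F along g(1,s).) -/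
section CommRing

variable {R : Type*} [CommRing R]

/-- The quadratic form `Q_s`, an equation of the Lie quadric of the Cayley surface along the
generator `g(1,s)`. -/
def lieQuadricForm (s : R) (x : Fin 4 → R) : R :=
  x 1 * x 2 - x 0 * x 3 - 3 * s * (x 1) ^ 2 + 3 * s ^ 2 * (x 0 * x 1) - s ^ 3 * (x 0) ^ 2

/-- A matrix of linear forms in `x` presenting the Lie quadric along `g(1,s)` as a determinantal
quadric. It is chosen so that the lines of the regulus appear as proportionalities between rows:
the second row is `u` times the first along `ℓ(s,u)`, and the first row vanishes along `g∞`. -/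
def regulusMatrix (s : R) (x : Fin 4 → R) : Matrix (Fin 2) (Fin 2) R :=
  !![x 1 - s * x 0, x 0;
    x 3 - s * x 2 + 3 * s ^ 2 * x 1 - 2 * s ^ 3 * x 0, x 2 - 3 * s * x 1 + 3 * s ^ 2 * x 0]

theorem det_regulusMatrix (s : R) (x : Fin 4 → R) :
    (regulusMatrix s x).det = lieQuadricForm s x := by
  rw [regulusMatrix, Matrix.det_fin_two_of, lieQuadricForm]
  ring

theorem regulusMatrix_osculatingTangent (s u a b : R) :
    regulusMatrix s (a • ![1, s, u, s * u - s ^ 3] + b • ![0, 1, 3 * s, u]) =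
      !![b, a; u * b, u * a] := by
  ext i j
  fin_cases i <;> fin_cases j <;> simp [regulusMatrix] <;> ring

theorem regulusMatrix_lineAtInfinity (s a b : R) :
    regulusMatrix s (a • ![0, 0, 1, 0] + b • ![0, 0, 0, 1]) = !![0, 0; b - s * a, a] := by
  simp [regulusMatrix]

theorem bw_regulus_on_quadric_general (s : R) :
    (∀ u : R, ∀ x ∈ Submodule.span R {![1, s, u, s * u - s ^ 3], ![0, 1, 3 * s, u]},
        lieQuadricForm s x = 0) ∧
      (∀ x ∈ Submodule.span R {![0, 0, 1, 0], ![0, 0, 0, 1]}, lieQuadricForm s x = 0) := by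
  constructor
  · intro u x hx
    obtain ⟨a, b, rfl⟩ := Submodule.mem_span_pair.1 hx
    rw [← det_regulusMatrix, regulusMatrix_osculatingTangent, Matrix.det_fin_two_of]
    ring
  · intro x hx
    obtain ⟨a, b, rfl⟩ := Submodule.mem_span_pair.1 hx
    rw [← det_regulusMatrix, regulusMatrix_lineAtInfinity, Matrix.det_fin_two_of]
    ring

end CommRing

/-- the quadratic form
`Q_s(x) = x₁x₂ − x₀x₃ − 3s·x₁² + 3s²·x₀x₁ − s³·x₀²` vanishes on every vector of each
osculating tangent `ℓ(s,u₂)` and on every vector of `g∞`; thus the osculating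
tangents at the points of the generator `g(1,s)`, together with `g∞`, lie on one
quadric (the regulus `R⁻(s)` on the Lie quadric). -/
theorem bw_regulus_on_quadric (K : Type*) [Field K] (s : K) :
    (∀ u₂ : K, ∀ x ∈ oscTang K s u₂,
        x 1 * x 2 - x 0 * x 3 - 3 * s * (x 1) ^ 2 + 3 * s ^ 2 * (x 0 * x 1)
          - s ^ 3 * (x 0) ^ 2 = 0) ∧
      (∀ x ∈ gInf K,
        x 1 * x 2 - x 0 * x 3 - 3 * s * (x 1) ^ 2 + 3 * s ^ 2 * (x 0 * x 1)
          - s ^ 3 * (x 0) ^ 2 = 0) :=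
  bw_regulus_on_quadric_general s
end
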